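/- arXiv:1611.08870 — 3 statements merged into one kernel-verified Lean document; each statement's English description precedes it below -/
import Mathlib

section
/- Suppose that F is a π-tree on a topological space X such that cofin(ω) ≫ Rise_F(X), and A ⊆ X is at most countable. Then there exists a π-tree H on the subspace X \ A such that cofin({2n+1 : n ∈ ω}) ≫ Rise_H(X \ A). -/
open Set

universe u v

/-- A family `γ` π-refines `δ`: every nonempty member of `δ` contains a
nonempty member of `γ`. -/
def PiRefines {α : Type*} (γ δ : Set (Set α)) : Prop :=
  ∀ D ∈ δ, D.Nonempty → ∃ G ∈ γ, G.Nonempty ∧ G ⊆ D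

/-- The finite intersection property. -/
def HasFIP {α : Type*} (γ : Set (Set α)) : Prop :=
  ∀ δ : Set (Set α), δ ⊆ γ → δ.Finite → δ.Nonempty → (⋂₀ δ).Nonempty

/-- `cofin A` is the family of complements in `A` of finite subsets of `A`. -/
def cofin (A : Set ℕ) : Set (Set ℕ) :=
  {B | ∃ C : Set ℕ, C.Finite ∧ C ⊆ A ∧ B = A \ C}

/-- A foliage tree on `X`: a set-theoretic tree (strict partial order with
well-ordered sets of strict predecessors) with a leaf (a subset of `X`)
attached to each node. -/
structure FoliageTree (X : Type u) where
  Node : Type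
  lt : Node → Node → Prop
  lt_irrefl : ∀ a, ¬ lt a a
  lt_trans : ∀ {a b c}, lt a b → lt b c → lt a c
  wellOrdered : ∀ a : Node, IsWellOrder {b : Node // lt b a} fun x y => lt x.1 y.1
  leaf : Node → Set X

/-- Strict proper-extension order on finite sequences of naturals. -/
def seqLT (a b : List ℕ) : Prop := a <+: b ∧ a ≠ b

namespace FoliageTree

variable {X : Type u}

/-- The sons (immediate successors) of a node. -/
def Sons (F : FoliageTree X) (x : F.Node) : Set F.Node :=
  {s | F.lt x s ∧ ¬ ∃ t, F.lt x t ∧ F.lt t s}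

/-- A node is maximal if it has no strict successor. -/
def IsMaxNode (F : FoliageTree X) (x : F.Node) : Prop := ¬ ∃ s, F.lt x s

/-- A chain of nodes. -/
def IsChainN (F : FoliageTree X) (C : Set F.Node) : Prop :=
  ∀ x ∈ C, ∀ y ∈ C, F.lt x y ∨ x = y ∨ F.lt y x

/-- A branch is a maximal chain. -/
def IsBranch (F : FoliageTree X) (B : Set F.Node) : Prop :=
  F.IsChainN B ∧ ∀ C, F.IsChainN C → B ⊆ C → B = C

/-- The height of a node: the order type of its set of strict predecessors. -/
noncomputable def height (F : FoliageTree X) (v : F.Node) : Ordinal :=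
  @Ordinal.type {b : F.Node // F.lt b v} (fun x y => F.lt x.1 y.1) (F.wellOrdered v)

/-- `shoot F v`: unions of leaves over cofinite sets of sons of `v`. -/
def shoot (F : FoliageTree X) (v : F.Node) : Set (Set X) :=
  {S | ∃ C : Set F.Node, C ⊆ F.Sons v ∧ (F.Sons v \ C).Finite ∧ S = ⋃ s ∈ C, F.leaf s}

/-- `scope F p`: the nodes whose leaf contains `p`. -/
def scope (F : FoliageTree X) (p : X) : Set F.Node := {x | p ∈ F.leaf x}

/-- The union of all leaves. -/
def flesh (F : FoliageTree X) : Set X := ⋃ x, F.leaf x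

/-- `F` is a foliage `ω,ω`-tree: its skeleton is order-isomorphic to
`(ω^{<ω}, ⊂)`. -/
def IsOmegaOmegaTree (F : FoliageTree X) : Prop := Nonempty (F.lt ≃r seqLT)

/-- `F` is locally strict: the leaf of every non-maximal node is the disjoint
union of the leaves of its sons. -/
def LocallyStrict (F : FoliageTree X) : Prop :=
  ∀ x, ¬ F.IsMaxNode x →
    F.leaf x = (⋃ s ∈ F.Sons x, F.leaf s) ∧
      ∀ s ∈ F.Sons x, ∀ t ∈ F.Sons x, s ≠ t → Disjoint (F.leaf s) (F.leaf t)

/-- `F` has strict branches: it has nodes, and along every branch the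
intersection of the leaves is a singleton. -/
def StrictBranches (F : FoliageTree X) : Prop :=
  Nonempty F.Node ∧ ∀ B, F.IsBranch B → ∃ p, (⋂ x ∈ B, F.leaf x) = {p}

/-- `r` is the root: the least node. -/
def IsRoot (F : FoliageTree X) (r : F.Node) : Prop := ∀ x, r = x ∨ F.lt r x

/-- All leaves are open. -/
def OpenIn [TopologicalSpace X] (F : FoliageTree X) : Prop := ∀ x, IsOpen (F.leaf x)

/-- `F` is a Baire foliage tree on `X`. -/
def IsBaireFoliageTree [TopologicalSpace X] (F : FoliageTree X) : Prop :=
  F.OpenIn ∧ F.LocallyStrict ∧ F.IsOmegaOmegaTree ∧ F.StrictBranches ∧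
    ∃ r, F.IsRoot r ∧ F.leaf r = Set.univ

/-- `F` grows into `X`. -/
def GrowsInto [TopologicalSpace X] (F : FoliageTree X) : Prop :=
  ∀ p : X, ∀ U ∈ nhds p, ∃ z ∈ F.scope p, PiRefines (F.shoot z) {U}

/-- `F` is a π-tree on `X`. -/
def IsPiTree [TopologicalSpace X] (F : FoliageTree X) : Prop :=
  F.IsBaireFoliageTree ∧ F.GrowsInto

/-- `rise F p U`: the set of (finite) heights of nodes `v` whose leaf contains
`p` and whose shoot π-refines `{U}`. -/
noncomputable def rise (F : FoliageTree X) (p : X) (U : Set X) : Set ℕ :=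
  {n | ∃ v ∈ F.scope p, PiRefines (F.shoot v) {U} ∧ F.height v = (n : Ordinal)}

/-- `Rise F`: all sets `rise F p U` for `p ∈ X` and `U` a neighbourhood of `p`. -/
def Rise [TopologicalSpace X] (F : FoliageTree X) : Set (Set ℕ) :=
  {R | ∃ p U, U ∈ nhds p ∧ R = F.rise p U}

end FoliageTree

namespace PT

def agree (x y : ℕ → ℕ) (n : ℕ) : Prop := ∀ i < n, x i = y i

lemma agree.symm {x y : ℕ → ℕ} {n : ℕ} (h : agree x y n) : agree y x n := fun i hi => (h i hi).symm

lemma agree.trans {x y z : ℕ → ℕ} {n : ℕ} (h : agree x y n) (h' : agree y z n) : agree x z n :=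
  fun i hi => (h i hi).trans (h' i hi)

lemma agree.mono {x y : ℕ → ℕ} {n m : ℕ} (h : agree x y n) (hm : m ≤ n) : agree x y m :=
  fun i hi => h i (lt_of_lt_of_le hi hm)

lemma agree.succ {x y : ℕ → ℕ} {n : ℕ} (h : agree x y n) (hn : x n = y n) : agree x y (n + 1) := by
  intro i hi
  rcases Nat.lt_succ_iff_lt_or_eq.1 hi with h1 | rfl
  · exact h i h1
  · exact hn

/-- Selection of the point of `A` to be removed from a cylinder. -/
structure IsSel (A : Set (ℕ → ℕ)) (sel : (ℕ → ℕ) → ℕ → Option (ℕ → ℕ)) : Prop where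
  loc : ∀ x y n, agree x y n → sel x n = sel y n
  mem : ∀ x n a, sel x n = some a → a ∈ A
  agr : ∀ x n a, sel x n = some a → agree a x n
  fin : ∀ x ∈ A, ∀ ν : ℕ → ℕ, Monotone ν →
    (∀ k a, sel x (ν k) = some a → ¬ agree a x (ν (k + 1))) → False

lemma exists_sel (A : Set (ℕ → ℕ)) (hA : A.Countable) : ∃ sel, IsSel A sel := by
  classical
  obtain ⟨e, he⟩ := Set.countable_iff_exists_injOn.1 hA
  let S : (ℕ → ℕ) → ℕ → Set (ℕ → ℕ) := fun x n => {a | a ∈ A ∧ agree a x n}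
  let g : Set (ℕ → ℕ) → Option (ℕ → ℕ) := fun s =>
    if h : s.Nonempty then some (Function.argminOn e s h) else none
  have g1 : ∀ s a, g s = some a → a ∈ s := by
    intro s a h
    simp only [g] at h
    split_ifs at h with h'
    · rw [← Option.some.inj h]; exact Function.argminOn_mem e s h'
  have g2 : ∀ s a b, g s = some a → b ∈ s → e a ≤ e b := by
    intro s a b h hb
    simp only [g] at h
    split_ifs at h with h'
    · rw [← Option.some.inj h]; exact Function.argminOn_le e s hb
  have g3 : ∀ s b, b ∈ s → ∃ a, g s = some a := by
    intro s b hb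
    have : s.Nonempty := ⟨b, hb⟩
    exact ⟨_, by simp only [g]; rw [dif_pos this]⟩
  refine ⟨fun x n => g (S x n), ?_, ?_, ?_, ?_⟩
  · intro x y n h
    have : S x n = S y n := by
      ext a
      exact ⟨fun ha => ⟨ha.1, ha.2.trans h⟩, fun ha => ⟨ha.1, ha.2.trans h.symm⟩⟩
    simp only [this]
  · intro x n a h; exact (g1 _ _ h).1
  · intro x n a h; exact (g1 _ _ h).2
  · intro x hx ν hν H
    have hxS : ∀ k, x ∈ S x (ν k) := fun k => ⟨hx, fun _ _ => rfl⟩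
    choose a ha using fun k => g3 _ _ (hxS k)
    have hlt : ∀ k, e (a k) < e (a (k + 1)) := by
      intro k
      have m1 := g1 _ _ (ha k)
      have m2 := g1 _ _ (ha (k + 1))
      have hle : e (a k) ≤ e (a (k + 1)) :=
        g2 _ _ _ (ha k) ⟨m2.1, m2.2.mono (hν (Nat.le_succ k))⟩
      refine lt_of_le_of_ne hle fun heq => ?_
      have := he m1.1 m2.1 heq
      exact H k _ (ha k) (this ▸ m2.2)
    have hk : ∀ k, k ≤ e (a k) := fun k =>
      (strictMono_nat_of_lt_succ hlt).le_apply
    have h1 := hk (e x + 1)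
    have h2 := g2 _ _ _ (ha (e x + 1)) (hxS _)
    omega

noncomputable def mm (sel : (ℕ → ℕ) → ℕ → Option (ℕ → ℕ)) (x : ℕ → ℕ) (n : ℕ) : ℕ :=
  match sel x n with
  | none => n + 1
  | some a => sInf {m | a m ≠ x m}

noncomputable def ii (sel : (ℕ → ℕ) → ℕ → Option (ℕ → ℕ)) (x : ℕ → ℕ) (n : ℕ) : ℕ :=
  match sel x n with
  | none => x n
  | some _ => mm sel x n - n

noncomputable def jj (sel : (ℕ → ℕ) → ℕ → Option (ℕ → ℕ)) (x : ℕ → ℕ) (n : ℕ) : ℕ :=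
  match sel x n with
  | none => x (n + 1)
  | some a => if x (mm sel x n) < a (mm sel x n) then x (mm sel x n) else x (mm sel x n) - 1

variable {A : Set (ℕ → ℕ)} {sel : (ℕ → ℕ) → ℕ → Option (ℕ → ℕ)}

lemma mm_none {x : ℕ → ℕ} {n : ℕ} (h : sel x n = none) : mm sel x n = n + 1 := by simp [mm, h]
lemma ii_none {x : ℕ → ℕ} {n : ℕ} (h : sel x n = none) : ii sel x n = x n := by simp [ii, h]
lemma jj_none {x : ℕ → ℕ} {n : ℕ} (h : sel x n = none) : jj sel x n = x (n + 1) := by simp [jj, h]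

lemma ii_some {x a : ℕ → ℕ} {n : ℕ} (h : sel x n = some a) : ii sel x n = mm sel x n - n := by
  simp [ii, h]
lemma jj_some {x a : ℕ → ℕ} {n : ℕ} (h : sel x n = some a) : jj sel x n =
    if x (mm sel x n) < a (mm sel x n) then x (mm sel x n) else x (mm sel x n) - 1 := by
  simp [jj, h]

lemma mm_some_eq {x a : ℕ → ℕ} {n m : ℕ} (h : sel x n = some a) (h1 : agree a x m)
    (h2 : a m ≠ x m) : mm sel x n = m := by
  simp only [mm, h]
  apply le_antisymm
  · exact Nat.sInf_le h2
  · refine le_csInf ⟨m, h2⟩ ?_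
    intro b hb
    by_contra hlt
    exact hb (h1 b (by omega))

lemma mm_some_spec (hs : IsSel A sel) {x a : ℕ → ℕ} {n : ℕ} (hx : x ∉ A) (h : sel x n = some a) :
    agree a x (mm sel x n) ∧ a (mm sel x n) ≠ x (mm sel x n) ∧ n ≤ mm sel x n := by
  have hne : ∃ m, a m ≠ x m := by
    by_contra hcon
    push Not at hcon
    exact hx (funext hcon ▸ hs.mem _ _ _ h)
  classical
  have h1 : agree a x (Nat.find hne) := fun i hi => not_not.1 (Nat.find_min hne hi)
  have h2 := Nat.find_spec hne
  rw [mm_some_eq h h1 h2]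
  refine ⟨h1, h2, ?_⟩
  by_contra hlt
  exact h2 (hs.agr _ _ _ h _ (by omega))

lemma le_mm (hs : IsSel A sel) {x : ℕ → ℕ} (n : ℕ) (hx : x ∉ A) : n ≤ mm sel x n := by
  rcases h : sel x n with _ | a
  · rw [mm_none h]; omega
  · exact (mm_some_spec hs hx h).2.2

/-- continuity of one step -/
lemma step_cont (hs : IsSel A sel) {x y : ℕ → ℕ} {n : ℕ} (hx : x ∉ A)
    (hxy : agree x y (mm sel x n + 1)) :
    mm sel y n = mm sel x n ∧ ii sel y n = ii sel x n ∧ jj sel y n = jj sel x n := by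
  have hle := le_mm hs n hx
  have hl := hs.loc x y n (hxy.mono (by omega))
  rcases h : sel x n with _ | a
  · have h' := hl ▸ h
    rw [mm_none h] at hxy
    rw [mm_none h, mm_none h', ii_none h, ii_none h', jj_none h, jj_none h']
    exact ⟨rfl, (hxy _ (by omega)).symm, (hxy _ (by omega)).symm⟩
  · have h' := hl ▸ h
    obtain ⟨s1, s2, -⟩ := mm_some_spec hs hx h
    have e1 := hxy (mm sel x n) (by omega)
    have : mm sel y n = mm sel x n :=
      mm_some_eq h' (s1.trans (hxy.mono (by omega))) (e1 ▸ s2)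
    rw [ii_some h, ii_some h', jj_some h, jj_some h', this, e1]
    exact ⟨rfl, rfl, rfl⟩

/-- first coordinate determines the odd node -/
lemma step_inj1 (hs : IsSel A sel) {x y : ℕ → ℕ} {n : ℕ} (hx : x ∉ A) (hy : y ∉ A)
    (hxy : agree x y n) (hi : ii sel x n = ii sel y n) :
    mm sel y n = mm sel x n ∧ agree x y (mm sel x n) := by
  have hl := hs.loc x y n hxy
  rcases h : sel x n with _ | a
  · have h' := hl ▸ h
    rw [ii_none h, ii_none h'] at hi
    rw [mm_none h, mm_none h']
    exact ⟨rfl, hxy.succ hi⟩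
  · have h' := hl ▸ h
    obtain ⟨s1, s2, s3⟩ := mm_some_spec hs hx h
    obtain ⟨t1, t2, t3⟩ := mm_some_spec hs hy h'
    rw [ii_some h, ii_some h'] at hi
    have : mm sel y n = mm sel x n := by omega
    rw [this] at t1
    exact ⟨this, s1.symm.trans t1⟩

lemma step_inj2 (hs : IsSel A sel) {x y : ℕ → ℕ} {n : ℕ} (hx : x ∉ A) (hy : y ∉ A)
    (hxy : agree x y n) (hi : ii sel x n = ii sel y n) (hj : jj sel x n = jj sel y n) :
    agree x y (mm sel x n + 1) := by
  obtain ⟨e, hag⟩ := step_inj1 hs hx hy hxy hi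
  refine hag.succ ?_
  have hl := hs.loc x y n hxy
  rcases h : sel x n with _ | a
  · have h' := hl ▸ h
    rw [jj_none h, jj_none h'] at hj
    rw [mm_none h]; exact hj
  · have h' := hl ▸ h
    have s2 := (mm_some_spec hs hx h).2.1
    have t2 := (mm_some_spec hs hy h').2.1
    rw [jj_some h, jj_some h', e] at hj
    rw [e] at t2
    split_ifs at hj <;> omega

lemma jj_le {x : ℕ → ℕ} {n : ℕ} : jj sel x n ≤ x (mm sel x n) := by
  rcases h : sel x n with _ | a
  · rw [jj_none h, mm_none h]
  · rw [jj_some h]; split_ifs <;> omega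

/-- surjectivity of one step -/
lemma step_surj (hs : IsSel A sel) (x : ℕ → ℕ) (n i j : ℕ) :
    ∃ x' m, n ≤ m ∧ agree x x' n ∧ ∀ z, agree z x' (m + 1) →
      mm sel z n = m ∧ ii sel z n = i ∧ jj sel z n = j ∧
        ∀ a, sel z n = some a → a m ≠ z m := by
  rcases h : sel x n with _ | a
  · refine ⟨fun l => if l < n then x l else if l = n then i else j, n + 1, by omega, ?_, ?_⟩
    · intro l hl; simp [hl]
    · intro z hz
      have hzx : agree z x n := by
        intro l hl
        rw [hz l (by omega)]; simp [hl]
      have hl := (hs.loc z x n hzx).trans h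
      rw [mm_none hl, ii_none hl, jj_none hl, hz n (by omega), hz (n + 1) (by omega)]
      simp [hl]
  · refine ⟨fun l => if l < n + i then a l else if j < a (n + i) then j else j + 1, n + i,
      by omega, ?_, ?_⟩
    · intro l hl
      have : l < n + i := by omega
      simp only [this, if_true]
      exact (hs.agr _ _ _ h l hl).symm
    · intro z hz
      have hza : agree a z (n + i) := by
        intro l hl
        rw [hz l (by omega)]; simp [hl]
      have hzm : z (n + i) = if j < a (n + i) then j else j + 1 := by
        rw [hz _ (by omega)]; simp
      have hl := (hs.loc z x n ((hza.mono (by omega)).symm.trans (hs.agr _ _ _ h))).trans h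
      have hne : a (n + i) ≠ z (n + i) := by
        rw [hzm]; split_ifs <;> omega
      have hm := mm_some_eq hl hza hne
      rw [ii_some hl, jj_some hl, hm, hzm]
      refine ⟨rfl, by omega, ?_, ?_⟩
      · split_ifs <;> omega
      · intro b hb
        rw [hl] at hb
        rw [← Option.some.inj hb, ← hzm]; exact hne

noncomputable def nn (sel : (ℕ → ℕ) → ℕ → Option (ℕ → ℕ)) (x : ℕ → ℕ) : ℕ → ℕ
  | 0 => 0
  | k + 1 => mm sel x (nn sel x k) + 1

noncomputable def gg (sel : (ℕ → ℕ) → ℕ → Option (ℕ → ℕ)) (x : ℕ → ℕ) (l : ℕ) : ℕ :=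
  if l % 2 = 0 then ii sel x (nn sel x (l / 2)) else jj sel x (nn sel x (l / 2))

lemma gg_even (x : ℕ → ℕ) (k : ℕ) : gg sel x (2 * k) = ii sel x (nn sel x k) := by
  simp [gg]

lemma gg_odd (x : ℕ → ℕ) (k : ℕ) : gg sel x (2 * k + 1) = jj sel x (nn sel x k) := by
  have : (2 * k + 1) / 2 = k := by omega
  simp [gg, this]

lemma le_nn (hs : IsSel A sel) {x : ℕ → ℕ} (hx : x ∉ A) (k : ℕ) : k ≤ nn sel x k := by
  induction k with
  | zero => simp
  | succ k ih =>
    have := le_mm hs (nn sel x k) hx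
    simp only [nn]; omega

lemma nn_mono (hs : IsSel A sel) {x : ℕ → ℕ} (hx : x ∉ A) : Monotone (nn sel x) := by
  refine monotone_nat_of_le_succ fun k => ?_
  have := le_mm hs (nn sel x k) hx
  simp only [nn]; omega

lemma nn_cont (hs : IsSel A sel) {x y : ℕ → ℕ} (hx : x ∉ A) (k : ℕ)
    (h : agree x y (nn sel x k)) : ∀ l ≤ k, nn sel y l = nn sel x l := by
  intro l
  induction l with
  | zero => intro _; rfl
  | succ l ih =>
    intro hl
    have e := ih (by omega)
    simp only [nn, e]
    have : nn sel x (l + 1) ≤ nn sel x k := nn_mono hs hx hl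
    rw [(step_cont hs hx (h.mono this)).1]

lemma gg_cont (hs : IsSel A sel) {x y : ℕ → ℕ} (hx : x ∉ A) (k : ℕ)
    (h : agree x y (nn sel x k)) : agree (gg sel x) (gg sel y) k := by
  intro l hl
  have hk : l / 2 + 1 ≤ k := by omega
  have e := nn_cont hs hx k h (l / 2) (by omega)
  have := step_cont hs hx (n := nn sel x (l / 2)) (y := y) (h.mono (nn_mono hs hx hk))
  simp only [gg, e]
  rw [this.2.1, this.2.2]

lemma gg_inj_aux (hs : IsSel A sel) {x y : ℕ → ℕ} (hx : x ∉ A) (hy : y ∉ A) (k : ℕ)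
    (h : agree (gg sel x) (gg sel y) (2 * k)) :
    nn sel y k = nn sel x k ∧ agree x y (nn sel x k) := by
  induction k with
  | zero => exact ⟨rfl, fun i hi => absurd hi (by simp [nn])⟩
  | succ k ih =>
    obtain ⟨e, hag⟩ := ih (h.mono (by omega))
    have h1 := h (2 * k) (by omega)
    have h2 := h (2 * k + 1) (by omega)
    rw [gg_even, gg_even, e] at h1
    rw [gg_odd, gg_odd, e] at h2
    simp only [nn, e]
    exact ⟨by rw [(step_inj1 hs hx hy hag h1).1], step_inj2 hs hx hy hag h1 h2⟩

lemma gg_odd_level (hs : IsSel A sel) {x y : ℕ → ℕ} (hx : x ∉ A) (hy : y ∉ A) (k : ℕ)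
    (h : agree (gg sel x) (gg sel y) (2 * k + 1)) :
    agree x y (mm sel x (nn sel x k)) ∧ gg sel y (2 * k + 1) ≤ y (mm sel x (nn sel x k)) := by
  obtain ⟨e, hag⟩ := gg_inj_aux hs hx hy k (h.mono (by omega))
  have h1 := h (2 * k) (by omega)
  rw [gg_even, gg_even, e] at h1
  obtain ⟨e2, h2⟩ := step_inj1 hs hx hy hag h1
  refine ⟨h2, ?_⟩
  rw [gg_odd, e, ← e2]
  exact jj_le

lemma gg_inj (hs : IsSel A sel) {x y : ℕ → ℕ} (hx : x ∉ A) (hy : y ∉ A)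
    (h : gg sel x = gg sel y) : x = y := by
  funext i
  have := (gg_inj_aux hs hx hy (i + 1) (by rw [h]; exact fun _ _ => rfl)).2
  exact this i (le_nn hs hx (i + 1))

lemma gg_surj (hs : IsSel A sel) (y : ℕ → ℕ) : ∃ x, x ∉ A ∧ gg sel x = y := by
  choose X M hM hX hz using step_surj hs
  let st : ℕ → (ℕ → ℕ) × ℕ := fun k => Nat.rec (fun _ => 0, 0)
    (fun k s => (X s.1 s.2 (y (2 * k)) (y (2 * k + 1)), M s.1 s.2 (y (2 * k)) (y (2 * k + 1)) + 1)) k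
  let ξ : ℕ → ℕ → ℕ := fun k => (st k).1
  let ν : ℕ → ℕ := fun k => (st k).2
  have hξ : ∀ k, ξ (k + 1) = X (ξ k) (ν k) (y (2 * k)) (y (2 * k + 1)) := fun k => rfl
  have hν : ∀ k, ν (k + 1) = M (ξ k) (ν k) (y (2 * k)) (y (2 * k + 1)) + 1 := fun k => rfl
  have hν0 : ν 0 = 0 := rfl
  have hstep : ∀ k, ν k < ν (k + 1) := fun k => by
    rw [hν]; exact Nat.lt_succ_of_le (hM _ _ _ _)
  have hsm : StrictMono ν := strictMono_nat_of_lt_succ hstep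
  have hag1 : ∀ k d, agree (ξ k) (ξ (k + d)) (ν k) := by
    intro k d
    induction d with
    | zero => exact fun _ _ => rfl
    | succ d ih =>
      refine ih.trans ?_
      rw [← add_assoc, hξ]
      exact (hX _ _ _ _).mono (hsm.monotone (by omega))
  let x : ℕ → ℕ := fun i => ξ (i + 1) i
  have hx : ∀ k, agree x (ξ k) (ν k) := by
    intro k i hi
    have hi' : i < ν (i + 1) := hsm.le_apply (x := i + 1)
    rcases le_total k (i + 1) with h | h
    · obtain ⟨d, hd⟩ := Nat.exists_eq_add_of_le h
      have := hag1 k d i hi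
      rw [← hd] at this
      exact this.symm
    · obtain ⟨d, hd⟩ := Nat.exists_eq_add_of_le h
      have := hag1 (i + 1) d i hi'
      rw [← hd] at this
      exact this
  have hk : ∀ k, _ := fun k => hz (ξ k) (ν k) (y (2 * k)) (y (2 * k + 1)) x (by
    rw [← hν, ← hξ]; exact hx (k + 1))
  have hn : ∀ k, nn sel x k = ν k := by
    intro k
    induction k with
    | zero => rfl
    | succ k ih =>
      simp only [nn, ih, hν]
      rw [(hk k).1]
  refine ⟨x, ?_, ?_⟩
  · intro hxA
    refine hs.fin x hxA ν hsm.monotone ?_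
    intro k a ha hcon
    refine (hk k).2.2.2 a ha (hcon _ ?_)
    rw [hν]; exact Nat.lt_succ_self _
  · funext l
    rcases Nat.even_or_odd' l with ⟨k, rfl | rfl⟩
    · rw [gg_even, hn, (hk k).2.1]
    · rw [gg_odd, hn, (hk k).2.2.1]

lemma exists_recoding (A : Set (ℕ → ℕ)) (hA : A.Countable) : ∃ g : (ℕ → ℕ) → (ℕ → ℕ),
    (∀ x y, x ∉ A → y ∉ A → g x = g y → x = y) ∧
    (∀ y, ∃ x, x ∉ A ∧ g x = y) ∧
    (∀ x, x ∉ A → ∀ k, ∃ n, ∀ y, agree x y n → agree (g x) (g y) k) ∧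
    (∀ x, x ∉ A → ∀ k, ∃ m, k ≤ m ∧ ∀ y, y ∉ A → agree (g x) (g y) (2 * k + 1) →
      agree x y m ∧ g y (2 * k + 1) ≤ y m) := by
  obtain ⟨sel, hs⟩ := exists_sel A hA
  refine ⟨gg sel, fun x y hx hy h => gg_inj hs hx hy h, gg_surj hs, ?_, ?_⟩
  · intro x hx k
    exact ⟨nn sel x k, fun y h => gg_cont hs hx k h⟩
  · intro x hx k
    refine ⟨mm sel x (nn sel x k), (le_nn hs hx k).trans (le_mm hs _ hx), ?_⟩
    intro y hy h
    exact gg_odd_level hs hx hy k h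

end PT

namespace PT

def pre (y : ℕ → ℕ) (n : ℕ) : List ℕ := (List.range n).map y

lemma pre_length (y : ℕ → ℕ) (n : ℕ) : (pre y n).length = n := by simp [pre]

lemma pre_succ (y : ℕ → ℕ) (n : ℕ) : pre y (n + 1) = pre y n ++ [y n] := by
  simp [pre, List.range_succ]

lemma pre_eq_iff (x y : ℕ → ℕ) (n : ℕ) : pre x n = pre y n ↔ agree x y n := by
  simp [pre, agree, List.map_inj_left]

lemma pre_prefix (y : ℕ → ℕ) {m n : ℕ} (h : m ≤ n) : pre y m <+: pre y n := by
  induction n, h using Nat.le_induction with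
  | base => exact List.prefix_rfl
  | succ n _ ih => rw [pre_succ]; exact ih.trans (List.prefix_append _ _)

lemma eq_of_prefix_same {a b t : List ℕ} (ha : a <+: t) (hb : b <+: t)
    (h : a.length = b.length) : a = b :=
  (List.prefix_of_prefix_length_le ha hb h.le).eq_of_length h

lemma eq_pre_of_prefix {t : List ℕ} {y : ℕ → ℕ} {n : ℕ} (h : t <+: pre y n) :
    t = pre y t.length := by
  have hl := h.length_le
  rw [pre_length] at hl
  exact eq_of_prefix_same h (pre_prefix y hl) (pre_length _ _).symm

lemma seqLT_iff (a b : List ℕ) : seqLT a b ↔ a <+: b ∧ a.length < b.length := by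
  constructor
  · rintro ⟨h, hne⟩
    exact ⟨h, lt_of_le_of_ne h.length_le fun hl => hne (h.eq_of_length hl)⟩
  · rintro ⟨h, hl⟩
    exact ⟨h, fun he => by subst he; omega⟩

lemma seqLT_append (a : List ℕ) (k : ℕ) : seqLT a (a ++ [k]) := by
  rw [seqLT_iff]; exact ⟨List.prefix_append _ _, by simp⟩

lemma exists_of_seqLT {a b : List ℕ} (h : seqLT a b) : ∃ k, a ++ [k] <+: b := by
  obtain ⟨⟨t, rfl⟩, hne⟩ := h
  cases t with
  | nil => simp at hne
  | cons k t => exact ⟨k, t, by simp⟩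

section
variable {X : Type u} (G : FoliageTree X) (e : G.lt ≃r seqLT)

lemma lt_iff (a b : G.Node) : G.lt a b ↔ seqLT (e a) (e b) := e.map_rel_iff.symm

lemma sons_iff (v s : G.Node) : s ∈ G.Sons v ↔ ∃ k, e s = e v ++ [k] := by
  constructor
  · rintro ⟨h1, h2⟩
    rw [lt_iff G e] at h1
    obtain ⟨k, hk⟩ := exists_of_seqLT h1
    refine ⟨k, ?_⟩
    by_contra hne
    refine h2 ⟨e.symm (e v ++ [k]), ?_, ?_⟩
    · rw [lt_iff G e]; simpa using seqLT_append _ _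
    · rw [lt_iff G e]; simp only [RelIso.apply_symm_apply]
      exact ⟨hk, fun h => hne h.symm⟩
  · rintro ⟨k, hk⟩
    refine ⟨?_, ?_⟩
    · rw [lt_iff G e, hk]; exact seqLT_append _ _
    · rintro ⟨t, h1, h2⟩
      rw [lt_iff G e, seqLT_iff] at h1 h2
      rw [hk] at h2
      have := h2.2
      simp at this
      omega

lemma height_eq (v : G.Node) : G.height v = ((e v).length : Ordinal) := by
  have hb : ∀ b : {b : G.Node // G.lt b v}, (e b.1).length < (e v).length := fun b =>
    ((seqLT_iff _ _).1 ((lt_iff G e _ _).1 b.2)).2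
  have hp : ∀ b : {b : G.Node // G.lt b v}, (e b.1) <+: (e v) := fun b =>
    ((lt_iff G e _ _).1 b.2).1
  let f : {b : G.Node // G.lt b v} → Fin (e v).length := fun b => ⟨_, hb b⟩
  have hinj : Function.Injective f := by
    intro a b h
    have := eq_of_prefix_same (hp a) (hp b) (by simpa [f] using h)
    exact Subtype.ext (e.injective this)
  have hsurj : Function.Surjective f := by
    intro i
    have hl : (List.take i.1 (e v)).length = i.1 := by simp
    refine ⟨⟨e.symm ((e v).take i.1), ?_⟩, ?_⟩
    · rw [lt_iff G e, seqLT_iff]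
      simp only [RelIso.apply_symm_apply]
      exact ⟨List.take_prefix _ _, by rw [hl]; exact i.2⟩
    · apply Fin.ext
      simp [f]
  let iso : (fun x y : {b : G.Node // G.lt b v} => G.lt x.1 y.1) ≃r
      ((· < ·) : Fin (e v).length → Fin (e v).length → Prop) :=
    { toEquiv := Equiv.ofBijective f ⟨hinj, hsurj⟩
      map_rel_iff' := by
        intro a b
        rw [lt_iff G e, seqLT_iff]
        simp only [Equiv.ofBijective_apply, f, Fin.mk_lt_mk]
        exact ⟨fun h => ⟨List.prefix_of_prefix_length_le (hp a) (hp b) h.le, h⟩, fun h => h.2⟩ }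
  haveI := G.wellOrdered v
  have := Ordinal.type_eq.2 ⟨iso⟩
  rw [FoliageTree.height, this, Ordinal.type_fin]

lemma shoot_iff (hne : ∀ v, (G.leaf v).Nonempty) (v : G.Node) {U : Set X} (hU : U.Nonempty) :
    PiRefines (G.shoot v) {U} ↔ ∃ M, ∀ k ≥ M, G.leaf (e.symm (e v ++ [k])) ⊆ U := by
  have hinj : Function.Injective fun k => e.symm (e v ++ [k]) := by
    intro a b h
    simpa using h
  constructor
  · intro h
    obtain ⟨S, ⟨C, hC, hfin, rfl⟩, -, hSU⟩ := h U rfl hU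
    have hf := hfin.preimage (f := fun k => e.symm (e v ++ [k])) hinj.injOn
    obtain ⟨M, hM⟩ := hf.bddAbove
    refine ⟨M + 1, fun k hk => ?_⟩
    have hkC : e.symm (e v ++ [k]) ∈ C := by
      by_contra hcon
      have : k ≤ M := hM ⟨(sons_iff G e _ _).2 ⟨k, by simp⟩, hcon⟩
      omega
    exact (Set.subset_biUnion_of_mem (u := G.leaf) hkC).trans hSU
  · rintro ⟨M, hM⟩ D hD -
    rw [Set.mem_singleton_iff] at hD
    subst hD
    refine ⟨_, ⟨(fun k => e.symm (e v ++ [k])) '' Set.Ici M, ?_, ?_, rfl⟩, ?_, ?_⟩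
    · rintro _ ⟨k, -, rfl⟩
      exact (sons_iff G e _ _).2 ⟨k, by simp⟩
    · refine ((Set.finite_Iio M).image (fun k => e.symm (e v ++ [k]))).subset ?_
      rintro s ⟨hs, hs'⟩
      obtain ⟨k, hk⟩ := (sons_iff G e _ _).1 hs
      have hk' : e.symm (e v ++ [k]) = s := by rw [← hk]; simp
      refine ⟨k, ?_, hk'⟩
      by_contra hcon
      exact hs' ⟨k, by simpa using hcon, hk'⟩
    · obtain ⟨p, hp⟩ := hne (e.symm (e v ++ [M]))
      exact ⟨p, Set.mem_biUnion ⟨M, Set.mem_Ici.2 le_rfl, rfl⟩ hp⟩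
    · refine Set.iUnion₂_subset ?_
      rintro _ ⟨k, hk, rfl⟩
      exact hM k hk

/-- The leaves of `G` are the cylinders of the coordinatization `c`. -/
def Coord (c : X → ℕ → ℕ) : Prop :=
  Function.Bijective c ∧ ∀ v p, p ∈ G.leaf v ↔ pre (c p) (e v).length = e v

variable {G e}

lemma eq_pre_getD (s : List ℕ) : s = pre (fun i => s.getD i 0) s.length := by
  apply List.ext_getElem
  · simp [pre]
  · intro i h1 h2
    simp [pre, h1]

lemma Coord.nonempty {c : X → ℕ → ℕ} (h : Coord G e c) (v : G.Node) : (G.leaf v).Nonempty := by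
  obtain ⟨p, hp⟩ := h.1.2 (fun i => (e v).getD i 0)
  exact ⟨p, (h.2 _ _).2 (by rw [hp]; exact (eq_pre_getD _).symm)⟩

lemma Coord.shoot_iff' {c : X → ℕ → ℕ} (h : Coord G e c) (v : G.Node) (p : X)
    (hv : p ∈ G.leaf v) {U : Set X} (hU : U.Nonempty) :
    PiRefines (G.shoot v) {U} ↔
      ∃ M, ∀ q, agree (c p) (c q) (e v).length → M ≤ c q (e v).length → q ∈ U := by
  rw [shoot_iff G e h.nonempty v hU]
  have hv' := (h.2 _ _).1 hv
  refine exists_congr fun M => ?_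
  constructor
  · intro H q hq hM
    refine H _ hM ?_
    rw [h.2]
    simp only [RelIso.apply_symm_apply, List.length_append, List.length_singleton]
    rw [pre_succ, (pre_eq_iff _ _ _).2 hq.symm, hv']
  · intro H k hk q hq
    rw [h.2] at hq
    simp only [RelIso.apply_symm_apply, List.length_append, List.length_singleton] at hq
    rw [pre_succ] at hq
    obtain ⟨h1, h2⟩ := List.append_inj' hq rfl
    refine H q ?_ ?_
    · rw [← pre_eq_iff, h1, hv']
    · simp at h2; omega

lemma Coord.rise_iff {c : X → ℕ → ℕ} (h : Coord G e c) (p : X) {U : Set X} (hU : U.Nonempty)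
    (n : ℕ) : n ∈ G.rise p U ↔ ∃ M, ∀ q, agree (c p) (c q) n → M ≤ c q n → q ∈ U := by
  constructor
  · rintro ⟨v, hv, h1, h2⟩
    rw [height_eq G e v] at h2
    have h2' : (e v).length = n := by exact_mod_cast h2
    have := (h.shoot_iff' v p hv hU).1 h1
    rwa [h2'] at this
  · intro H
    have hl : (e (e.symm (pre (c p) n))).length = n := by simp [pre_length]
    have hv : p ∈ G.leaf (e.symm (pre (c p) n)) := by
      rw [h.2, hl]; simp
    refine ⟨e.symm (pre (c p) n), hv, ?_, ?_⟩
    · rw [h.shoot_iff' _ p hv hU, hl]; exact H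
    · rw [height_eq G e, hl]

/-- chains of lists of unbounded length -/
lemma branch_pre (y : ℕ → ℕ) : G.IsBranch {v | ∃ n, e v = pre y n} := by
  have key : ∀ a b : G.Node, ∀ n m, e a = pre y n → e b = pre y m → n < m → G.lt a b := by
    intro a b n m ha hb h
    rw [lt_iff G e, seqLT_iff, ha, hb, pre_length, pre_length]
    exact ⟨pre_prefix y h.le, h⟩
  refine ⟨?_, ?_⟩
  · rintro a ⟨n, hn⟩ b ⟨m, hm⟩
    rcases lt_trichotomy n m with h | h | h
    · exact Or.inl (key _ _ _ _ hn hm h)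
    · subst h; exact Or.inr (Or.inl (e.injective (hn.trans hm.symm)))
    · exact Or.inr (Or.inr (key _ _ _ _ hm hn h))
  · intro C hC hBC
    refine Set.Subset.antisymm hBC fun t ht => ⟨(e t).length, ?_⟩
    have hu : e.symm (pre y (e t).length) ∈ C := hBC ⟨(e t).length, by simp⟩
    rcases hC _ ht _ hu with h | h | h
    · rw [lt_iff G e, seqLT_iff] at h
      simp [pre_length] at h
    · rw [← e.apply_symm_apply (pre y (e t).length), ← h]
    · rw [lt_iff G e, seqLT_iff] at h
      simp [pre_length] at h

lemma exists_coord [TopologicalSpace X] (hG : G.IsBaireFoliageTree) :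
    ∃ (e : G.lt ≃r seqLT) (c : X → ℕ → ℕ), Coord G e c := by
  obtain ⟨-, hls, ⟨e⟩, ⟨-, hbr⟩, r, hr, hrl⟩ := hG
  let L : List ℕ → Set X := fun s => G.leaf (e.symm s)
  have hL0 : L [] = Set.univ := by
    rcases hr (e.symm []) with h | h
    · simp only [L, ← h, hrl]
    · rw [lt_iff G e, seqLT_iff] at h
      simp at h
  have hsplit : ∀ s, L s = (⋃ k, L (s ++ [k])) ∧ ∀ k l, k ≠ l →
      Disjoint (L (s ++ [k])) (L (s ++ [l])) := by
    intro s
    have hson : ∀ k, e.symm (s ++ [k]) ∈ G.Sons (e.symm s) := fun k =>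
      (sons_iff G e _ _).2 ⟨k, by simp⟩
    have := hls (e.symm s) (fun h => h ⟨e.symm (s ++ [0]), (hson 0).1⟩)
    refine ⟨?_, ?_⟩
    · refine this.1.trans ?_
      ext p
      simp only [Set.mem_iUnion]
      constructor
      · rintro ⟨t, ht, hp⟩
        obtain ⟨k, hk⟩ := (sons_iff G e _ _).1 ht
        refine ⟨k, ?_⟩
        have : e.symm (s ++ [k]) = t := by
          rw [e.apply_symm_apply] at hk; rw [← hk]; simp
        simpa only [L, this] using hp
      · rintro ⟨k, hk⟩
        exact ⟨_, hson k, hk⟩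
    · intro k l hkl
      refine this.2 _ (hson k) _ (hson l) fun h => hkl ?_
      simpa using h
  have hpt : ∀ y : ℕ → ℕ, ∃ p, ∀ q, (∀ n, q ∈ L (pre y n)) ↔ q = p := by
    intro y
    obtain ⟨p, hp⟩ := hbr _ (branch_pre (e := e) y)
    refine ⟨p, fun q => ?_⟩
    rw [← Set.mem_singleton_iff, ← hp]
    simp only [Set.mem_iInter, Set.mem_setOf_eq]
    constructor
    · rintro h v ⟨n, hn⟩
      have := h n
      simpa only [L, ← hn, e.symm_apply_apply] using this
    · intro h n
      exact h _ ⟨n, by simp⟩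
  choose pt hpt using hpt
  have hmem : ∀ y n, pt y ∈ L (pre y n) := fun y => (hpt y _).2 rfl
  have hdisj : ∀ n y z p, p ∈ L (pre y n) → p ∈ L (pre z n) → pre y n = pre z n := by
    intro n
    induction n with
    | zero => intros; rfl
    | succ n ih =>
      intro y z p hy hz
      rw [pre_succ] at hy hz
      have hy' : p ∈ L (pre y n) := by
        rw [(hsplit _).1]; exact Set.mem_iUnion.2 ⟨_, hy⟩
      have hz' : p ∈ L (pre z n) := by
        rw [(hsplit _).1]; exact Set.mem_iUnion.2 ⟨_, hz⟩
      have h1 := ih y z p hy' hz'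
      rw [pre_succ, pre_succ, h1]
      rw [h1] at hy
      by_contra hne
      have hne' : y n ≠ z n := fun h => hne (by rw [h])
      exact Set.disjoint_left.1 ((hsplit _).2 _ _ hne') hy hz
  have hbij : Function.Bijective pt := by
    refine ⟨?_, ?_⟩
    · intro y z h
      funext i
      have := hdisj (i + 1) y z (pt y) (hmem _ _) (h ▸ hmem _ _)
      rw [pre_eq_iff] at this
      exact this i (Nat.lt_succ_self i)
    · intro p
      have hnext : ∀ s : {s // p ∈ L s}, ∃ k, p ∈ L (s.1 ++ [k]) := by
        rintro ⟨s, hs⟩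
        rw [(hsplit s).1] at hs
        exact Set.mem_iUnion.1 hs
      choose k hk using hnext
      let st : ℕ → {s // p ∈ L s} := fun n => Nat.rec ⟨[], hL0 ▸ Set.mem_univ p⟩
        (fun _ s => ⟨s.1 ++ [k s], hk s⟩) n
      have hst : ∀ n, pre (fun i => k (st i)) n = (st n).1 := by
        intro n
        induction n with
        | zero => rfl
        | succ n ih => rw [pre_succ, ih]
      refine ⟨fun i => k (st i), ((hpt _ p).1 fun n => ?_).symm⟩
      rw [hst]; exact (st n).2
  let E := Equiv.ofBijective pt hbij
  refine ⟨e, E.symm, E.symm.bijective, ?_⟩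
  intro v p
  obtain ⟨y, rfl⟩ := hbij.2 p
  have hy : E.symm (pt y) = y := E.symm_apply_apply y
  rw [hy]
  have hLv : G.leaf v = L (e v) := by simp [L]
  rw [hLv]
  constructor
  · intro h
    have h' := eq_pre_getD (e v)
    rw [h'] at h
    exact (hdisj _ _ _ _ (hmem _ _) h).trans h'.symm
  · intro h
    rw [← h]; exact hmem _ _

end

section
variable {Y : Type u}

/-- The foliage tree of cylinders of `c`. -/
def cyl (c : Y → ℕ → ℕ) : FoliageTree Y where
  Node := List ℕ
  lt := seqLT
  lt_irrefl := fun a h => h.2 rfl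
  lt_trans := by
    intro a b c h1 h2
    rw [seqLT_iff] at *
    exact ⟨h1.1.trans h2.1, h1.2.trans h2.2⟩
  wellOrdered := by
    intro a
    let f : (fun x y : {b : List ℕ // seqLT b a} => seqLT x.1 y.1) ↪r
        ((· < ·) : ℕ → ℕ → Prop) :=
      { toFun := fun b => b.1.length
        inj' := fun x y h => Subtype.ext (eq_of_prefix_same x.2.1 y.2.1 h)
        map_rel_iff' := by
          intro x y
          rw [seqLT_iff]
          exact ⟨fun h => ⟨List.prefix_of_prefix_length_le x.2.1 y.2.1 (le_of_lt h), h⟩,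
            fun h => h.2⟩ }
    exact f.isWellOrder
  leaf := fun s => {q | pre (c q) s.length = s}

def cylIso (c : Y → ℕ → ℕ) : (cyl c).lt ≃r seqLT := RelIso.refl _

lemma cyl_coord (c : Y → ℕ → ℕ) (hc : Function.Bijective c) : Coord (cyl c) (cylIso c) c :=
  ⟨hc, fun _ _ => Iff.rfl⟩

lemma branch_exists (c : Y → ℕ → ℕ) (B : Set (List ℕ)) (hB : (cyl c).IsBranch B) :
    ∃ y : ℕ → ℕ, ∀ z : ℕ → ℕ, (∀ s ∈ B, pre z s.length = s) ↔ z = y := by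
  obtain ⟨hch, hmax⟩ := hB
  have hcmp : ∀ s ∈ B, ∀ t ∈ B, s.length ≤ t.length → s <+: t := by
    intro s hs t ht hl
    rcases hch s hs t ht with h | h | h
    · exact h.1
    · subst h; exact List.prefix_rfl
    · have := ((seqLT_iff _ _).1 h).2; omega
  have hadd : ∀ t : List ℕ, (∀ s ∈ B, seqLT s t) → t ∈ B := by
    intro t ht
    have hC : (cyl c).IsChainN (insert t B) := by
      rintro x (rfl | hx) y (rfl | hy)
      · exact Or.inr (Or.inl rfl)
      · exact Or.inr (Or.inr (ht _ hy))
      · exact Or.inl (ht _ hx)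
      · exact hch _ hx _ hy
    rw [hmax _ hC (Set.subset_insert _ _)]
    exact Set.mem_insert _ _
  have hunb : ∀ n, ∃ s ∈ B, n < s.length := by
    intro n
    by_contra hcon
    push Not at hcon
    rcases Set.eq_empty_or_nonempty B with h0 | h0
    · have := hadd [] (by simp [h0])
      simp [h0] at this
    · have hf : (List.length '' B).Finite := (Set.finite_Iic n).subset (by
        rintro _ ⟨s, hs, rfl⟩; exact hcon s hs)
      obtain ⟨_, ⟨s, hs, rfl⟩, hsm⟩ := Set.exists_max_image (List.length '' B) id hf (h0.image _)
      have hle : ∀ t ∈ B, t.length ≤ s.length := fun t ht => hsm _ ⟨t, ht, rfl⟩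
      have := hadd (s ++ [0]) (by
        intro t ht
        rw [seqLT_iff]
        refine ⟨(hcmp t ht s hs (hle t ht)).trans (List.prefix_append _ _), ?_⟩
        have := hle t ht
        simp; omega)
      have := hle _ this
      simp at this
  choose t htB htl using hunb
  refine ⟨fun i => (t i).getD i 0, fun z => ⟨?_, ?_⟩⟩
  · intro h
    funext i
    have h1 := h _ (htB i)
    have h2 : (pre z (t i).length).getD i 0 = z i := by
      simp [pre, htl i]
    rw [← h2, h1]
  · rintro rfl s hs
    conv_rhs => rw [eq_pre_getD s]
    rw [pre_eq_iff]
    intro i hi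
    have hti := htl i
    have : s[i] = (t i)[i] := by
      rcases le_total s.length (t i).length with h | h
      · exact (hcmp _ hs _ (htB i) h).getElem hi
      · exact ((hcmp _ (htB i) _ hs h).getElem hti).symm
    simp [hi, hti, this]

lemma cyl_baire [TopologicalSpace Y] (c : Y → ℕ → ℕ) (hc : Function.Bijective c)
    (hopen : ∀ p n, ∃ V ∈ nhds p, ∀ q ∈ V, agree (c p) (c q) n) :
    (cyl c).IsBaireFoliageTree := by
  refine ⟨?_, ?_, ⟨cylIso c⟩, ⟨⟨([] : List ℕ)⟩, ?_⟩, ([] : List ℕ), ?_, ?_⟩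
  · intro s
    rw [isOpen_iff_mem_nhds]
    intro p hp
    obtain ⟨V, hV, h⟩ := hopen p (List.length s)
    refine Filter.mem_of_superset hV fun q hq => ?_
    have : pre (c p) (List.length s) = s := hp
    change pre (c q) (List.length s) = s
    rw [← (pre_eq_iff _ _ _).2 (h q hq), this]
  · intro (s : List ℕ) _
    have hs : ∀ t : List ℕ, t ∈ (cyl c).Sons s ↔ ∃ k, t = s ++ [k] :=
      sons_iff (cyl c) (cylIso c) s
    refine ⟨?_, ?_⟩
    · ext p
      simp only [Set.mem_iUnion]
      constructor
      · intro hp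
        refine ⟨s ++ [c p (List.length s)], (hs _).2 ⟨_, rfl⟩, ?_⟩
        have hp' : pre (c p) (List.length s) = s := hp
        change pre (c p) (List.length (s ++ [c p (List.length s)])) = s ++ [c p (List.length s)]
        rw [List.length_append, List.length_singleton, pre_succ, hp']
      · rintro ⟨t, ht, hp⟩
        obtain ⟨k, rfl⟩ := (hs t).1 ht
        have hp' : pre (c p) (List.length (s ++ [k])) = s ++ [k] := hp
        rw [List.length_append, List.length_singleton, pre_succ] at hp'
        exact (List.append_inj' hp' rfl).1
    · intro a ha b hb hab
      obtain ⟨k, rfl⟩ := (hs a).1 ha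
      obtain ⟨l, rfl⟩ := (hs b).1 hb
      rw [Set.disjoint_left]
      intro p hp hq
      refine hab ?_
      have hp' : pre (c p) (List.length (s ++ [k])) = s ++ [k] := hp
      have hq' : pre (c p) (List.length (s ++ [l])) = s ++ [l] := hq
      rw [List.length_append, List.length_singleton] at hp' hq'
      exact hp'.symm.trans hq'
  · intro B hB
    obtain ⟨y, hy⟩ := branch_exists c B hB
    obtain ⟨p, rfl⟩ := hc.2 y
    refine ⟨p, ?_⟩
    ext q
    rw [Set.mem_singleton_iff, ← hc.1.eq_iff, ← hy]
    simp only [Set.mem_iInter]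
    exact Iff.rfl
  · intro x
    by_cases h : ([] : List ℕ) = x
    · exact Or.inl h
    · exact Or.inr ⟨List.nil_prefix, h⟩
  · ext p
    simp [cyl, pre]

end

end PT

/-- Corollary `cor.pi.tree.for.X-A` of the paper. -/
theorem exists_piTree_on_cocountable_subspace
    {X : Type u} [TopologicalSpace X] (F : FoliageTree X) (hF : F.IsPiTree)
    (hcof : PiRefines (cofin Set.univ) F.Rise) (A : Set X) (hA : A.Countable) :
    ∃ H : FoliageTree ↥(Aᶜ), H.IsPiTree ∧
      PiRefines (cofin {k | ∃ n : ℕ, k = 2 * n + 1}) H.Rise := by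
  obtain ⟨⟨hB, hgrow⟩⟩ := And.intro hF trivial
  obtain ⟨e, c, hc⟩ := PT.exists_coord hB
  obtain ⟨g, ginj, gsurj, gcont, godd⟩ := PT.exists_recoding (c '' A) (hA.image c)
  have hnot : ∀ p : ↥(Aᶜ), c p.1 ∉ c '' A := by
    rintro ⟨p, hp⟩ ⟨a, ha, h⟩
    have h' : a = p := hc.1.1 h
    exact hp (h' ▸ ha)
  let c' : ↥(Aᶜ) → ℕ → ℕ := fun p => g (c p.1)
  have hbij : Function.Bijective c' := by
    refine ⟨fun p q h => Subtype.ext (hc.1.1 (ginj _ _ (hnot p) (hnot q) h)), fun y => ?_⟩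
    obtain ⟨x, hx, hxy⟩ := gsurj y
    obtain ⟨p, rfl⟩ := hc.1.2 x
    exact ⟨⟨p, fun h => hx ⟨p, h, rfl⟩⟩, hxy⟩
  have hopen : ∀ p n, ∃ V ∈ nhds p, ∀ q ∈ V, PT.agree (c' p) (c' q) n := by
    intro p n
    obtain ⟨m, hm⟩ := gcont _ (hnot p) n
    have ho := hB.1 (e.symm (PT.pre (c p.1) m))
    refine ⟨_, (ho.preimage continuous_subtype_val).mem_nhds (x := p) ?_, ?_⟩
    · rw [Set.mem_preimage, hc.2]; simp [PT.pre_length]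
    · intro q hq
      rw [Set.mem_preimage, hc.2] at hq
      simp only [RelIso.apply_symm_apply, PT.pre_length] at hq
      exact hm _ ((PT.pre_eq_iff _ _ _).1 hq.symm)
  have hco := PT.cyl_coord c' hbij
  have hrise : ∀ (p : ↥(Aᶜ)) (U : Set ↥(Aᶜ)), U ∈ nhds p →
      ∃ N, ∀ k ≥ N, 2 * k + 1 ∈ (PT.cyl c').rise p U := by
    intro p U hU
    obtain ⟨W, hW, hWU⟩ := mem_nhds_subtype _ _ _ |>.1 hU
    have hWne : W.Nonempty := ⟨p.1, mem_of_mem_nhds hW⟩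
    have hne : (F.rise p.1 W).Nonempty := by
      obtain ⟨z, hz, hzU⟩ := hgrow p.1 W hW
      exact ⟨_, z, hz, hzU, PT.height_eq F e z⟩
    obtain ⟨S, ⟨C, hC, -, rfl⟩, -, hS⟩ := hcof _ ⟨p.1, W, hW, rfl⟩ hne
    obtain ⟨N, hN⟩ := hC.bddAbove
    refine ⟨N + 1, fun k hk => ?_⟩
    rw [hco.rise_iff p ⟨p, mem_of_mem_nhds hU⟩]
    obtain ⟨m, hkm, hm⟩ := godd _ (hnot p) k
    have hmr : m ∈ F.rise p.1 W := hS ⟨Set.mem_univ _, fun h => by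
      have := hN h
      omega⟩
    obtain ⟨M, hM⟩ := (hc.rise_iff p.1 hWne m).1 hmr
    refine ⟨M, fun q hq hMq => hWU ?_⟩
    obtain ⟨h1, h2⟩ := hm _ (hnot q) hq
    exact hM q.1 h1 (le_trans hMq h2)
  refine ⟨PT.cyl c', ⟨PT.cyl_baire c' hbij hopen, ?_⟩, ?_⟩
  · intro p U hU
    obtain ⟨N, hN⟩ := hrise p U hU
    obtain ⟨v, hv, h, -⟩ := hN N le_rfl
    exact ⟨v, hv, h⟩
  · rintro _ ⟨p, U, hU, rfl⟩ -
    obtain ⟨N, hN⟩ := hrise p U hU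
    refine ⟨_, ⟨{k | ∃ n, n < N ∧ k = 2 * n + 1}, ?_, ?_, rfl⟩, ⟨2 * N + 1, ⟨N, rfl⟩, ?_⟩, ?_⟩
    · refine ((Set.finite_Iio N).image fun n => 2 * n + 1).subset ?_
      rintro _ ⟨n, hn, rfl⟩
      exact ⟨n, hn, rfl⟩
    · rintro _ ⟨n, -, rfl⟩
      exact ⟨n, rfl⟩
    · rintro ⟨n, hn, h⟩
      omega
    · rintro _ ⟨⟨k, rfl⟩, hk⟩
      refine hN k ?_
      by_contra hcon
      exact hk ⟨k, by omega, rfl⟩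
end

section
/- Suppose that 1 ≤ |A| ≤ ω and for each α ∈ A, either X_α is the Baire space N, or X_α is a subspace of the Sorgenfrey line R_S with R_S \ X_α at most countable. Then the product space ∏_{α∈A} X_α has a π-tree. -/
open Set

universe u v

/-- The Sorgenfrey line: the reals with the topology generated by the
half-open intervals `[a, b)`. -/
def SorgLine : Type := ℝ

instance : TopologicalSpace SorgLine :=
  TopologicalSpace.generateFrom {s : Set ℝ | ∃ a b : ℝ, s = Set.Ico a b}


namespace PT

theorem seqLT_snoc_iff (s t : List ℕ) :
    (seqLT s t ∧ ¬ ∃ r, seqLT s r ∧ seqLT r t) ↔ ∃ k, t = s ++ [k] := by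
  constructor
  · rintro ⟨⟨⟨w, rfl⟩, hne⟩, h⟩
    cases w with
    | nil => simp at hne
    | cons k w =>
      refine ⟨k, ?_⟩
      by_contra hc
      apply h
      refine ⟨s ++ [k], ⟨⟨[k], rfl⟩, by simp⟩, ⟨⟨w, by simp⟩, fun hh => hc hh.symm⟩⟩
  · rintro ⟨k, rfl⟩
    refine ⟨⟨⟨[k], rfl⟩, by simp⟩, ?_⟩
    rintro ⟨r, ⟨h1, h1'⟩, h2, h2'⟩
    rcases Nat.lt_or_ge s.length r.length with h | h
    · exact h2' (h2.eq_of_length_le (by simp; omega))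
    · exact h1' (h1.eq_of_length_le h)

theorem seqLT_length {s t : List ℕ} (h : seqLT s t) : s.length < t.length := by
  by_contra hc
  exact h.2 (h.1.eq_of_length_le (by omega))

theorem seqLT_of_prefix_lt {s t : List ℕ} (h : s <+: t) (h' : s.length < t.length) : seqLT s t :=
  ⟨h, fun e => by subst e; omega⟩

theorem comparable_of_le_common {s t r : List ℕ} (hs : s <+: r) (ht : t <+: r) :
    seqLT s t ∨ s = t ∨ seqLT t s := by
  by_cases e : s = t
  · exact Or.inr (Or.inl e)
  rcases le_total s.length t.length with h | h
  · exact Or.inl ⟨List.prefix_of_prefix_length_le hs ht h, e⟩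
  · exact Or.inr (Or.inr ⟨List.prefix_of_prefix_length_le ht hs h, fun h => e h.symm⟩)

theorem seqLT_trans {a b c : List ℕ} (h : seqLT a b) (h' : seqLT b c) : seqLT a c :=
  seqLT_of_prefix_lt (h.1.trans h'.1) ((seqLT_length h).trans (seqLT_length h'))

theorem seqLT_wo (a : List ℕ) :
    IsWellOrder {b : List ℕ // seqLT b a} fun x y => seqLT x.1 y.1 := by
  have wf : WellFounded (fun x y : {b : List ℕ // seqLT b a} => seqLT x.1 y.1) :=
    Subrelation.wf (r := fun x y => x.1.length < y.1.length) (fun h => seqLT_length h)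
      (InvImage.wf (fun x : {b : List ℕ // seqLT b a} => x.1.length) Nat.lt_wfRel.wf)
  refine { wf := wf, trichotomous := ?_ }
  intro x y h1 h2
  rcases comparable_of_le_common x.2.1 y.2.1 with h | h | h
  · exact absurd h h1
  · exact Subtype.ext h
  · exact absurd h h2

/-- The tree associated with a coding of points by sequences. -/
def tree {X : Type u} (Ψ : X → (ℕ → ℕ)) : FoliageTree X where
  Node := List ℕ
  lt := seqLT
  lt_irrefl := fun _ h => h.2 rfl
  lt_trans := seqLT_trans
  wellOrdered := seqLT_wo
  leaf := fun s => {x | ∀ i v, s[i]? = some v → Ψ x i = v}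

theorem mem_snoc {X : Type u} (Ψ : X → (ℕ → ℕ)) (s : List ℕ) (k : ℕ) (x : X) :
    x ∈ (tree Ψ).leaf (s ++ [k] : List ℕ) ↔
      x ∈ (tree Ψ).leaf (s : List ℕ) ∧ Ψ x s.length = k := by
  constructor
  · intro h
    refine ⟨fun i v hi => h i v ?_, h _ _ (by simp)⟩
    have : i < s.length := by
      by_contra hc
      rw [List.getElem?_eq_none (by omega)] at hi
      simp at hi
    rw [List.getElem?_append_left this]; exact hi
  · rintro ⟨h, h'⟩ i v hi
    rcases lt_trichotomy i s.length with hl | hl | hl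
    · rw [List.getElem?_append_left hl] at hi; exact h i v hi
    · subst hl; simp at hi; omega
    · rw [List.getElem?_eq_none (by simp; omega)] at hi
      simp at hi

theorem tree_branch {X : Type u} (Ψ : X → (ℕ → ℕ)) (B : Set (List ℕ))
    (hB : (tree Ψ).IsBranch B) :
    ∃ f : ℕ → ℕ, (∀ s ∈ B, ∀ i v, s[i]? = some v → f i = v) ∧
      ∀ i, ∃ s ∈ B, s[i]? = some (f i) := by
  obtain ⟨hc, hm⟩ := hB
  have hc' : ∀ x ∈ B, ∀ y ∈ B, seqLT x y ∨ x = y ∨ seqLT y x := hc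
  have hadd : ∀ t : List ℕ, (∀ y ∈ B, y <+: t ∨ t <+: y) → t ∈ B := by
    intro t ht
    have : B = insert t B := by
      apply hm _ _ (Set.subset_insert _ _)
      have key : ∀ y ∈ B, seqLT t y ∨ t = y ∨ seqLT y t := by
        intro y hy
        by_cases e : t = y
        · exact Or.inr (Or.inl e)
        rcases ht y hy with h | h
        · exact Or.inr (Or.inr ⟨h, fun h => e h.symm⟩)
        · exact Or.inl ⟨h, e⟩
      intro x hx y hy
      show seqLT x y ∨ x = y ∨ seqLT y x
      rcases hx with rfl | hx <;> rcases hy with rfl | hy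
      · exact Or.inr (Or.inl rfl)
      · exact key y hy
      · have := key x hx; tauto
      · exact hc' x hx y hy
    rw [this]; exact Set.mem_insert _ _
  have hlong : ∀ n : ℕ, ∃ s ∈ B, n ≤ s.length := by
    intro n
    induction n with
    | zero => exact ⟨[], hadd [] (fun y _ => Or.inr ⟨y, rfl⟩), Nat.zero_le _⟩
    | succ n ih =>
      obtain ⟨s, hs, hn⟩ := ih
      by_contra hcon
      push Not at hcon
      have hsB : s ++ [0] ∈ B := by
        apply hadd
        intro y hy
        left
        have h1 := hcon y hy
        rcases hc' y hy s hs with h | h | h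
        · exact h.1.trans ⟨[0], rfl⟩
        · rw [h]; exact ⟨[0], rfl⟩
        · have := seqLT_length h; omega
      have := hcon _ hsB
      simp at this; omega
  have hex : ∀ i : ℕ, ∃ v : ℕ, ∃ s ∈ B, s[i]? = some v := by
    intro i
    obtain ⟨s, hs, h⟩ := hlong (i+1)
    exact ⟨s[i], s, hs, List.getElem?_eq_getElem _⟩
  choose f hf using hex
  refine ⟨f, ?_, hf⟩
  intro s hs i v hv
  obtain ⟨t, ht, htv⟩ := hf i
  have key : ∀ a b : List ℕ, a <+: b → ∀ v w, a[i]? = some v → b[i]? = some w → v = w := by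
    rintro a b ⟨c, rfl⟩ v w h1 h2
    have : i < a.length := by
      by_contra hc
      rw [List.getElem?_eq_none (by omega)] at h1
      simp at h1
    rw [List.getElem?_append_left this, h1] at h2
    simpa using h2
  rcases hc' s hs t ht with h | h | h
  · exact (key _ _ h.1 _ _ hv htv).symm
  · exact (key _ _ (h ▸ List.prefix_refl _) _ _ hv htv).symm
  · exact (key _ _ h.1 _ _ htv hv)

theorem tree_piTree {X : Type u} [TopologicalSpace X] (Ψ : X ≃ (ℕ → ℕ))
    (hcont : Continuous Ψ)
    (hg : ∀ p : X, ∀ U ∈ nhds p, ∃ n m, ∀ x, (∀ i < n, Ψ x i = Ψ p i) → m ≤ Ψ x n → x ∈ U) :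
    ∃ F : FoliageTree X, F.IsPiTree := by
  have hsons : ∀ s : List ℕ, (tree Ψ).Sons s = {t | ∃ k, t = s ++ [k]} := by
    intro s; ext t; exact seqLT_snoc_iff s t
  refine ⟨tree Ψ, ⟨?_, ?_, ⟨RelIso.refl _⟩, ⟨⟨([] : List ℕ)⟩, ?_⟩, ?_⟩, ?_⟩
  · intro s
    have : ∀ s : List ℕ, IsOpen ((tree Ψ).leaf s) := by
      intro s
      induction s using List.reverseRecOn with
      | nil => convert isOpen_univ; ext x; simp [tree]
      | append_singleton s k ih =>
        have h2 : IsOpen {x | Ψ x s.length = k} :=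
          (isOpen_discrete ({k} : Set ℕ)).preimage ((continuous_apply s.length).comp hcont)
        convert ih.inter h2 using 1
        ext x; exact mem_snoc Ψ s k x
    exact this s
  · intro s _
    rw [show (tree Ψ).Sons s = {t : List ℕ | ∃ k, t = (show List ℕ from s) ++ [k]} from hsons s]
    constructor
    · ext x
      simp only [mem_iUnion, exists_prop]
      constructor
      · intro h
        exact ⟨_, ⟨_, rfl⟩, (mem_snoc Ψ s (Ψ x (List.length s)) x).2 ⟨h, rfl⟩⟩
      · rintro ⟨_, ⟨k, rfl⟩, h⟩
        exact ((mem_snoc Ψ s k x).1 h).1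
    · rintro _ ⟨k, rfl⟩ _ ⟨l, rfl⟩ hne
      rw [Set.disjoint_left]
      intro x h1 h2
      have e1 := ((mem_snoc Ψ s k x).1 h1).2
      have e2 := ((mem_snoc Ψ s l x).1 h2).2
      apply hne; rw [← e1, ← e2]
  · intro B hB
    obtain ⟨f, h1, h2⟩ := tree_branch Ψ B hB
    refine ⟨Ψ.symm f, ?_⟩
    ext x
    simp only [mem_iInter, mem_singleton_iff]
    constructor
    · intro h
      rw [Equiv.eq_symm_apply]
      funext i
      obtain ⟨s, hs, hi⟩ := h2 i
      exact h s hs i _ hi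
    · rintro rfl s hs i v hv
      rw [Equiv.apply_symm_apply]
      exact h1 s hs i v hv
  · refine ⟨([] : List ℕ), ?_, ?_⟩
    · intro x
      show ([] : List ℕ) = x ∨ seqLT [] x
      by_cases h : ([] : List ℕ) = x
      · exact Or.inl h
      · exact Or.inr ⟨⟨x, rfl⟩, h⟩
    · ext x; simp [tree]
  · intro p U hU
    obtain ⟨n, m, h⟩ := hg p U hU
    let z : List ℕ := (List.range n).map (Ψ p)
    have hzl : z.length = n := by simp [z]
    have hz : ∀ x, x ∈ (tree Ψ).leaf z ↔ ∀ i < n, Ψ x i = Ψ p i := by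
      intro x
      constructor
      · intro hx i hi
        apply hx i
        simp [z, hi]
      · intro hx i v hv
        have hi : i < n := by
          by_contra hc
          rw [List.getElem?_eq_none (by omega)] at hv
          simp at hv
        simp [z, hi] at hv
        rw [hx i hi, hv]
    refine ⟨z, (hz p).2 (fun _ _ => rfl), ?_⟩
    rintro D rfl -
    refine ⟨_, ⟨{t | ∃ k ≥ m, t = z ++ [k]}, ?_, ?_, rfl⟩, ?_, ?_⟩
    · rw [hsons]; rintro _ ⟨k, _, rfl⟩; exact ⟨k, rfl⟩
    · rw [hsons]
      apply ((Set.finite_lt_nat m).image (fun k => z ++ [k])).subset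
      rintro _ ⟨⟨k, rfl⟩, h'⟩
      refine ⟨k, ?_, rfl⟩
      by_contra hk
      exact h' ⟨k, by simpa using hk, rfl⟩
    · let x := Ψ.symm (fun i => if i < n then Ψ p i else m)
      refine ⟨x, ?_⟩
      simp only [mem_iUnion, mem_ofPred_eq, exists_prop]
      refine ⟨_, ⟨m, le_refl _, rfl⟩, (mem_snoc Ψ z m x).2 ⟨(hz x).2 ?_, ?_⟩⟩
      · intro i hi; simp [x, hi]
      · rw [hzl]; simp [x]
    · intro x hx
      simp only [mem_iUnion, mem_ofPred_eq, exists_prop] at hx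
      obtain ⟨_, ⟨k, hk, rfl⟩, hx⟩ := hx
      obtain ⟨h1, h2⟩ := (mem_snoc Ψ z k x).1 hx
      rw [hzl] at h2
      exact h x ((hz x).1 h1) (by omega)


/-- interleaving pairs -/
def unpairSeq : (ℕ → ℕ × ℕ) ≃ (ℕ → ℕ) where
  toFun f n := if n % 2 = 0 then (f (n / 2)).1 else (f (n / 2)).2
  invFun g n := (g (2 * n), g (2 * n + 1))
  left_inv f := by
    funext n
    have h1 : (2 * n + 1) % 2 = 1 := by omega
    have h2 : (2 * n + 1) / 2 = n := by omega
    simp [h1, h2]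
  right_inv g := by
    funext n
    rcases Nat.mod_two_eq_zero_or_one n with h | h
    · have : 2 * (n / 2) = n := by omega
      simp [h, this]
    · have : 2 * (n / 2) + 1 = n := by omega
      simp [h, this]

theorem pairs_piTree {X : Type u} [TopologicalSpace X] (Ψ : X ≃ (ℕ → ℕ × ℕ))
    (hcont : Continuous Ψ)
    (hg : ∀ p : X, ∀ U ∈ nhds p, ∃ n m, ∀ x, (∀ i < n, Ψ x i = Ψ p i) → m ≤ (Ψ x n).1 → x ∈ U) :
    ∃ F : FoliageTree X, F.IsPiTree := by
  refine tree_piTree (Ψ.trans unpairSeq) ?_ ?_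
  · refine continuous_pi fun n => ?_
    show Continuous (fun x => if n % 2 = 0 then (Ψ x (n / 2)).1 else (Ψ x (n / 2)).2)
    have : Continuous (fun x => Ψ x (n/2)) := (continuous_apply (n/2)).comp hcont
    split_ifs
    · exact continuous_fst.comp this
    · exact continuous_snd.comp this
  · intro p U hU
    obtain ⟨n, m, h⟩ := hg p U hU
    refine ⟨2 * n, m, fun x hx hm => h x ?_ ?_⟩
    · intro i hi
      have h1 := hx (2 * i) (by omega)
      have h2 := hx (2 * i + 1) (by omega)
      have e1 : (2 * i + 1) % 2 = 1 := by omega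
      have e2 : (2 * i + 1) / 2 = i := by omega
      simp [unpairSeq, e1, e2] at h1 h2
      exact Prod.ext h1 h2
    · simpa [unpairSeq] using hm

/-- A coding which is good at all large levels. -/
def Good {X : Type u} [TopologicalSpace X] (Φ : X ≃ (ℕ → ℕ × ℕ)) : Prop :=
  Continuous Φ ∧ ∀ p : X, ∀ U ∈ nhds p, ∃ N, ∀ n ≥ N, ∃ m, ∀ x,
    (∀ i < n, Φ x i = Φ p i) → m ≤ (Φ x n).1 → x ∈ U

theorem exists_theta (B : Type) [Finite B] [Nonempty B] :
    ∃ Θ : (B → ℕ × ℕ) ≃ ℕ × ℕ, ∀ d b, (Θ d).1 ≤ (d b).1 := by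
  let κ : (B → ℕ × ℕ) → ℕ := fun d => ⨅ b, (d b).1
  have hinf : ∀ k, Infinite {d // κ d = k} := by
    intro k
    refine Infinite.of_injective
      (fun j : ℕ => (⟨fun _ => (k, j), by simp [κ]⟩ : {d // κ d = k})) ?_
    intro i j h
    have := congrFun (congrArg Subtype.val h) (Classical.arbitrary B)
    simpa using this
  have he : ∀ k, Nonempty ({d // κ d = k} ≃ ℕ) := by
    intro k
    have := hinf k
    exact nonempty_equiv_of_countable
  let E : (B → ℕ × ℕ) ≃ ℕ × ℕ :=
    ((Equiv.sigmaFiberEquiv κ).symm.trans (Equiv.sigmaCongrRight fun k => (he k).some)).trans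
      (Equiv.sigmaEquivProd ℕ ℕ)
  refine ⟨E, fun d b => ?_⟩
  show κ d ≤ (d b).1
  exact ciInf_le (OrderBot.bddBelow _) b

theorem product_good {A : Type} [Countable A] [Nonempty A]
    {X : A → Type u} [∀ a, TopologicalSpace (X a)]
    (Φ : ∀ a, X a ≃ (ℕ → ℕ × ℕ)) (hΦ : ∀ a, Good (Φ a)) :
    ∃ F : FoliageTree (∀ a, X a), F.IsPiTree := by
  obtain ⟨e0, he0⟩ := exists_injective_nat A
  obtain ⟨a0⟩ := (inferInstance : Nonempty A)
  obtain ⟨e, hea0, hfin⟩ : ∃ e : A → ℕ, e a0 = 0 ∧ ∀ n, Finite {a // e a ≤ n} := by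
    refine ⟨fun a => e0 a - e0 a0, by simp, fun n => ?_⟩
    refine Finite.of_injective
      (fun a => (⟨e0 a.1, by have := a.2; simp at this; simp; omega⟩ : Set.Iic (n + e0 a0))) ?_
    intro a b h
    simp at h
    exact Subtype.ext (he0 h)
  have hne : ∀ n, Nonempty {a // e a ≤ n} := fun n => ⟨⟨a0, by omega⟩⟩
  choose Θ hΘ using fun n => exists_theta {a // e a ≤ n}
  let R : (∀ a : A, ℕ → ℕ × ℕ) ≃ (∀ n, {a // e a ≤ n} → ℕ × ℕ) :=
    { toFun := fun g n a => g a.1 (n - e a.1)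
      invFun := fun h a k => h (k + e a) ⟨a, by omega⟩
      left_inv := by intro g; funext a k; simp
      right_inv := by
        intro h; funext n a
        obtain ⟨a, ha⟩ := a
        have key : ∀ m (hm : m = n) (hm' : e a ≤ m), h m ⟨a, hm'⟩ = h n ⟨a, ha⟩ := by
          rintro m rfl _; rfl
        exact key _ (by show n - e a + e a = n; omega) _ }
  let Ψ : (∀ a, X a) ≃ (ℕ → ℕ × ℕ) :=
    ((Equiv.piCongrRight Φ).trans R).trans (Equiv.piCongrRight Θ)
  have hΨ : ∀ x n, Ψ x n = Θ n (fun a => Φ a.1 (x a.1) (n - e a.1)) := fun x n => rfl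
  refine pairs_piTree Ψ ?_ ?_
  · refine continuous_pi fun n => ?_
    simp only [hΨ]
    refine (continuous_of_discreteTopology (f := Θ n)).comp ?_
    refine continuous_pi fun a => ?_
    exact (continuous_apply (n - e a.1)).comp ((hΦ a.1).1.comp (continuous_apply a.1))
  · intro p U hU
    rw [nhds_pi, Filter.mem_pi] at hU
    obtain ⟨J, hJ, t, ht, hsub⟩ := hU
    choose N hN using fun a => (hΦ a).2 (p a) (t a) (ht a)
    obtain ⟨n, hn⟩ : ∃ n, ∀ a ∈ J, N a + e a ≤ n := by
      obtain ⟨n, hn⟩ := (hJ.image (fun a => N a + e a)).bddAbove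
      exact ⟨n, fun a ha => hn ⟨a, ha, rfl⟩⟩
    have hM : ∀ a, ∃ m, a ∈ J → ∀ x, (∀ i < n - e a, Φ a x i = Φ a (p a) i) →
        m ≤ (Φ a x (n - e a)).1 → x ∈ t a := by
      intro a
      by_cases ha : a ∈ J
      · obtain ⟨m, hm⟩ := hN a (n - e a) (by have := hn a ha; omega)
        exact ⟨m, fun _ => hm⟩
      · exact ⟨0, fun h => absurd h ha⟩
    choose M hM using hM
    obtain ⟨m, hm⟩ : ∃ m, ∀ a ∈ J, M a ≤ m := by
      obtain ⟨n, hn⟩ := (hJ.image M).bddAbove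
      exact ⟨n, fun a ha => hn ⟨a, ha, rfl⟩⟩
    refine ⟨n, m, fun x hx hmx => hsub ?_⟩
    intro a ha
    have hea : e a ≤ n := by have := hn a ha; omega
    apply hM a ha
    · intro i hi
      have h1 := hx (i + e a) (by omega)
      rw [hΨ, hΨ] at h1
      have h2 := congrFun ((Θ _).injective h1) ⟨a, by omega⟩
      simpa using h2
    · have h1 := hΘ n (fun a => Φ a.1 (x a.1) (n - e a.1)) ⟨a, hea⟩
      rw [← hΨ] at h1
      exact (hm a ha).trans (hmx.trans h1)

theorem good_baire {X : Type u} [TopologicalSpace X] (h : X ≃ₜ (ℕ → ℕ)) :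
    ∃ Φ : X ≃ (ℕ → ℕ × ℕ), Good Φ := by
  let c : ℕ ≃ ℕ × ℕ := Nat.pairEquiv.symm
  let c' : (ℕ → ℕ) ≃ₜ (ℕ → ℕ × ℕ) := Homeomorph.piCongrRight fun _ =>
    { c with
      continuous_toFun := continuous_of_discreteTopology
      continuous_invFun := continuous_of_discreteTopology }
  let Φ := h.trans c'
  refine ⟨Φ.toEquiv, Φ.continuous, ?_⟩
  intro p U hU
  have h1 : Φ.symm ⁻¹' U ∈ nhds (Φ p) := by
    apply Φ.symm.continuous.continuousAt
    simpa using hU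
  rw [nhds_pi, Filter.mem_pi] at h1
  obtain ⟨J, hJ, t, ht, hsub⟩ := h1
  obtain ⟨N, hN⟩ := hJ.bddAbove
  refine ⟨N + 1, fun n hn => ⟨0, fun x hx _ => ?_⟩⟩
  have : Φ x ∈ Φ.symm ⁻¹' U := by
    apply hsub
    intro i hi
    have h2 : Φ x i = Φ p i := hx i (by have := hN hi; omega)
    rw [h2]
    exact mem_of_mem_nhds (ht i)
  simpa using this


/-- `c` is a partition of `I` into half-open intervals. -/
def IsPart (ι : Type) (I : Set ℝ) (l r : ι → ℝ) : Prop :=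
  (∀ k, l k < r k) ∧ (∀ x, x ∈ I ↔ ∃ k, x ∈ Ico (l k) (r k)) ∧
    ∀ x k k', x ∈ Ico (l k) (r k) → x ∈ Ico (l k') (r k') → k = k'

theorem part_up {b : ℕ → ℝ} {v : ℝ} (hb : StrictMono b)
    (hlim : Filter.Tendsto b Filter.atTop (nhds v)) :
    IsPart ℕ (Ico (b 0) v) b (fun k => b (k + 1)) := by
  refine ⟨fun k => hb (by omega), fun x => ⟨fun hx => ?_, ?_⟩, ?_⟩
  · have hex : ∃ k, x < b k := ((hlim.eventually (lt_mem_nhds hx.2))).exists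
    classical
    have h1 := Nat.find_spec hex
    have h0 : Nat.find hex ≠ 0 := by
      intro h; rw [h] at h1; exact absurd hx.1 (not_le.2 h1)
    obtain ⟨k, hk⟩ := Nat.exists_eq_succ_of_ne_zero h0
    refine ⟨k, ?_, ?_⟩
    · exact not_lt.1 (Nat.find_min hex (m := k) (by omega))
    · rw [hk] at h1; exact h1
  · rintro ⟨k, h1, h2⟩
    exact ⟨(hb.monotone (Nat.zero_le k)).trans h1,
      h2.trans_le (hb.monotone.ge_of_tendsto hlim _)⟩
  · intro x k k' h h'
    by_contra hne
    rcases lt_or_gt_of_ne hne with hl | hl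
    · have := hb.monotone (show k + 1 ≤ k' from hl)
      exact absurd (h.2.trans_le (this.trans h'.1)) (lt_irrefl _)
    · have := hb.monotone (show k' + 1 ≤ k from hl)
      exact absurd (h'.2.trans_le (this.trans h.1)) (lt_irrefl _)

theorem part_down {d : ℕ → ℝ} {q : ℝ} (hd : StrictAnti d)
    (hlim : Filter.Tendsto d Filter.atTop (nhds q)) :
    IsPart ℕ (Ioo q (d 0)) (fun k => d (k + 1)) d := by
  refine ⟨fun k => hd (by omega), fun x => ⟨fun hx => ?_, ?_⟩, ?_⟩
  · have hex : ∃ k, d k ≤ x := by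
      obtain ⟨k, hk⟩ := ((hlim.eventually (gt_mem_nhds hx.1))).exists
      exact ⟨k, hk.le⟩
    classical
    have h1 := Nat.find_spec hex
    have h0 : Nat.find hex ≠ 0 := by
      intro h; rw [h] at h1; exact absurd hx.2 (not_lt.2 h1)
    obtain ⟨k, hk⟩ := Nat.exists_eq_succ_of_ne_zero h0
    refine ⟨k, ?_, ?_⟩
    · rw [hk] at h1; exact h1
    · exact not_le.1 (Nat.find_min hex (m := k) (by omega))
  · rintro ⟨k, h1, h2⟩
    have h3 : q ≤ d (k + 2) := hd.antitone.le_of_tendsto hlim _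
    have h4 : d (k + 2) < d (k + 1) := hd (by omega)
    exact ⟨by simp only at h1; linarith, h2.trans_le (hd.antitone (Nat.zero_le k))⟩
  · intro x k k' h h'
    by_contra hne
    rcases lt_or_gt_of_ne hne with hl | hl
    · have := hd.antitone (show k + 1 ≤ k' from hl)
      exact absurd (h'.2.trans_le (this.trans h.1)) (lt_irrefl _)
    · have := hd.antitone (show k' + 1 ≤ k from hl)
      exact absurd (h.2.trans_le (this.trans h'.1)) (lt_irrefl _)

/-- increasing approach with small steps -/
theorem exists_up {a b ε : ℝ} (hab : a < b) (hε : 0 < ε) :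
    ∃ s : ℕ → ℝ, StrictMono s ∧ Filter.Tendsto s Filter.atTop (nhds b) ∧ s 0 = a ∧
      ∀ k, s (k + 1) - s k ≤ ε := by
  obtain ⟨ρ, h0, h1, h2⟩ : ∃ ρ : ℝ, 0 < ρ ∧ ρ < 1 ∧ (b - a) * (1 - ρ) ≤ ε := by
    have hba : 0 < b - a := by linarith
    refine ⟨1 - min (1/2) (ε / (b - a)), ?_, ?_, ?_⟩
    · have := min_le_left (1/2) (ε / (b - a)); linarith
    · have : 0 < min (1/2) (ε / (b - a)) := lt_min (by norm_num) (by positivity)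
      linarith
    · have := min_le_right (1/2) (ε / (b - a))
      rw [le_div_iff₀ hba] at this
      linarith
  refine ⟨fun k => b - (b - a) * ρ ^ k, ?_, ?_, by simp, ?_⟩
  · apply strictMono_nat_of_lt_succ
    intro k
    have hk : 0 < ρ ^ k := by positivity
    have : ρ ^ (k + 1) < ρ ^ k := by rw [pow_succ]; nlinarith
    nlinarith
  · have := (tendsto_pow_atTop_nhds_zero_of_lt_one h0.le h1).const_mul (b - a)
    simpa using this.const_sub b
  · intro k
    have hk : ρ ^ k ≤ 1 := pow_le_one₀ h0.le h1.le
    have hk' : 0 < ρ ^ k := by positivity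
    have h3 : 0 ≤ (b - a) * (1 - ρ) := by nlinarith
    simp only [pow_succ]
    nlinarith

theorem exists_down {q v : ℝ} (h : q < v) :
    ∃ d : ℕ → ℝ, StrictAnti d ∧ Filter.Tendsto d Filter.atTop (nhds q) ∧ d 0 = v := by
  obtain ⟨s, h1, h2, h3, -⟩ := exists_up (neg_lt_neg h) one_pos
  refine ⟨fun k => - s k, fun i j hij => neg_lt_neg (h1 hij), ?_, by simp [h3]⟩
  simpa using h2.neg

theorem exists_part_minus {u v : ℝ} (huv : u < v) (T : Set ℝ) (hT : T.Subsingleton) :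
    ∃ l r : ℕ → ℝ, IsPart ℕ (Ico u v \ T) l r := by
  by_cases hq : ∃ q ∈ T, q ∈ Ico u v
  · obtain ⟨q, hqT, hq⟩ := hq
    have hTq : T = {q} := hT.eq_singleton_of_mem hqT
    obtain ⟨d, hd1, hd2, hd3⟩ := exists_down hq.2
    have hD := part_down hd1 hd2
    rw [hd3] at hD
    rcases hq.1.eq_or_lt with h | h
    · refine ⟨fun k => d (k + 1), d, ?_⟩
      · convert hD using 1
        subst h
        ext x
        simp only [hTq, mem_sdiff, mem_Ico, mem_singleton_iff, mem_Ioo]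
        constructor
        · rintro ⟨⟨h1, h2⟩, h3⟩; exact ⟨lt_of_le_of_ne h1 (Ne.symm h3), h2⟩
        · rintro ⟨h1, h2⟩; exact ⟨⟨h1.le, h2⟩, h1.ne'⟩
    · obtain ⟨s, hs1, hs2, hs3, -⟩ := exists_up h one_pos
      have hU := part_up hs1 hs2
      rw [hs3] at hU
      let E : ℕ ≃ ℕ ⊕ ℕ := Equiv.natSumNatEquivNat.symm
      let l : ℕ ⊕ ℕ → ℝ := Sum.elim s (fun k => d (k + 1))
      let r : ℕ ⊕ ℕ → ℝ := Sum.elim (fun k => s (k + 1)) d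
      have hP : IsPart (ℕ ⊕ ℕ) (Ico u v \ T) l r := by
        refine ⟨?_, ?_, ?_⟩
        · rintro (k | k)
          · exact hU.1 k
          · exact hD.1 k
        · intro x
          rw [Sum.exists]
          show _ ↔ (∃ k, x ∈ Ico (s k) (s (k + 1))) ∨ (∃ k, x ∈ Ico (d (k + 1)) (d k))
          rw [← hU.2.1, ← hD.2.1]
          simp only [hTq, mem_sdiff, mem_Ico, mem_singleton_iff, mem_Ioo]
          constructor
          · rintro ⟨⟨h1, h2⟩, h3⟩
            rcases lt_or_gt_of_ne h3 with h4 | h4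
            · exact Or.inl ⟨h1, h4⟩
            · exact Or.inr ⟨h4, h2⟩
          · rintro (⟨h1, h2⟩ | ⟨h1, h2⟩)
            · exact ⟨⟨h1, h2.trans hq.2⟩, h2.ne⟩
            · exact ⟨⟨hq.1.trans h1.le, h2⟩, h1.ne'⟩
        · rintro x (k | k) (k' | k') h1 h2
          · rw [hU.2.2 x k k' h1 h2]
          · have a1 := (hU.2.1 x).2 ⟨k, h1⟩
            have a2 := (hD.2.1 x).2 ⟨k', h2⟩
            exact absurd (a1.2.trans a2.1) (lt_irrefl _)
          · have a1 := (hU.2.1 x).2 ⟨k', h2⟩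
            have a2 := (hD.2.1 x).2 ⟨k, h1⟩
            exact absurd (a1.2.trans a2.1) (lt_irrefl _)
          · rw [hD.2.2 x k k' h1 h2]
      refine ⟨l ∘ E, r ∘ E, fun k => hP.1 _, fun x => ?_, fun x k k' h1 h2 => ?_⟩
      · rw [hP.2.1]
        exact ⟨fun ⟨k, hk⟩ => ⟨E.symm k, by simpa using hk⟩, fun ⟨k, hk⟩ => ⟨E k, hk⟩⟩
      · exact E.injective (hP.2.2 x _ _ h1 h2)
  · push Not at hq
    obtain ⟨s, hs1, hs2, hs3, -⟩ := exists_up huv one_pos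
    have hU := part_up hs1 hs2
    rw [hs3] at hU
    refine ⟨s, fun k => s (k + 1), ?_⟩
    · convert hU using 1
      ext x
      exact ⟨fun h => h.1, fun h => ⟨h, fun h' => hq x h' h⟩⟩

/-- Refining a partition and removing `T`. -/
theorem part_refine {I : Set ℝ} {u v : ℕ → ℝ} (h : IsPart ℕ I u v) (T : Set ℝ)
    (hT : T.Subsingleton) :
    ∃ l r : ℕ × ℕ → ℝ, IsPart (ℕ × ℕ) (I \ T) l r ∧ ∀ k, u k.1 ≤ l k ∧ r k ≤ v k.1 := by
  choose l r hlr using fun k => exists_part_minus (h.1 k) T hT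
  have hsub : ∀ k j x, x ∈ Ico (l k j) (r k j) → x ∈ Ico (u k) (v k) \ T := fun k j x hx =>
    ((hlr k).2.1 x).2 ⟨j, hx⟩
  refine ⟨fun k => l k.1 k.2, fun k => r k.1 k.2, ⟨fun k => (hlr k.1).1 k.2, ?_, ?_⟩, ?_⟩
  · intro x
    constructor
    · rintro ⟨h1, h2⟩
      obtain ⟨k, hk⟩ := (h.2.1 x).1 h1
      obtain ⟨j, hj⟩ := ((hlr k).2.1 x).1 ⟨hk, h2⟩
      exact ⟨(k, j), hj⟩
    · rintro ⟨⟨k, j⟩, hx⟩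
      have := hsub k j x hx
      exact ⟨(h.2.1 x).2 ⟨k, this.1⟩, this.2⟩
  · rintro x ⟨k, j⟩ ⟨k', j'⟩ h1 h2
    have e := h.2.2 x k k' (hsub k j x h1).1 (hsub k' j' x h2).1
    subst e
    rw [(hlr k).2.2 x j j' h1 h2]
  · rintro ⟨k, j⟩
    have hs : Ico (l k j) (r k j) ⊆ Ico (u k) (v k) := fun x hx => (hsub k j x hx).1
    exact (Ico_subset_Ico_iff ((hlr k).1 j)).1 hs

def Cls (I : Set ℝ) : Prop := I = univ ∨ ∃ a b, a < b ∧ I = Ico a b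

theorem exists_split (I : Set ℝ) (hI : Cls I) (T : Set ℝ) (hT : T.Subsingleton) (ε : ℝ)
    (hε : 0 < ε) :
    ∃ l r : ℕ × ℕ → ℝ, IsPart (ℕ × ℕ) (I \ T) l r ∧ (∀ k, r k - l k ≤ ε) ∧
      (∀ k, Icc (l k) (r k) ⊆ I) ∧
      ∀ a b, I = Ico a b → ∀ y < b, ∃ m, ∀ k : ℕ × ℕ, m ≤ k.1 → y ≤ l k := by
  rcases hI with rfl | ⟨a, b, hab, rfl⟩
  · let E : ℕ ≃ ℤ := (Denumerable.eqv ℤ).symm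
    have hP : IsPart ℕ univ (fun k => (E k : ℝ) * ε) (fun k => ((E k : ℝ) + 1) * ε) := by
      have key : ∀ (x : ℝ) (z : ℤ), x ∈ Ico ((z : ℝ) * ε) (((z : ℝ) + 1) * ε) ↔ ⌊x / ε⌋ = z := by
        intro x z
        rw [Int.floor_eq_iff, le_div_iff₀ hε, div_lt_iff₀ hε, mem_Ico]
      refine ⟨fun k => by nlinarith, fun x => ?_, fun x k k' h1 h2 => ?_⟩
      · simp only [mem_univ, true_iff]
        exact ⟨E.symm ⌊x / ε⌋, by rw [key]; simp⟩
      · rw [key] at h1 h2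
        exact E.injective (h1.symm.trans h2)
    obtain ⟨l, r, h1, h2⟩ := part_refine hP T hT
    refine ⟨l, r, h1, fun k => ?_, fun k => subset_univ _, fun a b h => ?_⟩
    · have := h2 k; linarith
    · have hb : b ∈ Ico a b := h ▸ mem_univ b
      exact absurd hb.2 (lt_irrefl _)
  · obtain ⟨s, hs1, hs2, hs3, hs4⟩ := exists_up hab hε
    have hU := part_up hs1 hs2
    rw [hs3] at hU
    obtain ⟨l, r, h1, h2⟩ := part_refine hU T hT
    refine ⟨l, r, h1, fun k => ?_, fun k => ?_, fun a' b' h y hy => ?_⟩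
    · have := h2 k; have := hs4 k.1; linarith
    · intro x hx
      have h3 := h2 k
      have h4 : s 0 ≤ s k.1 := hs1.monotone (Nat.zero_le _)
      have h5 : s (k.1 + 1) < s (k.1 + 2) := hs1 (by omega)
      have h6 : s (k.1 + 2) ≤ b := hs1.monotone.ge_of_tendsto hs2 _
      exact ⟨by linarith [hx.1], by linarith [hx.2]⟩
    · have hb : b = b' := by
        exact ((Ico_eq_Ico_iff (Or.inl hab)).1 h).2
      subst hb
      obtain ⟨m, hm⟩ := (hs2.eventually (lt_mem_nhds hy)).exists
      refine ⟨m, fun k hk => ?_⟩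
      exact hm.le.trans ((hs1.monotone hk).trans (h2 k).1)


theorem real_code (S : Set ℝ) (hS : Sᶜ.Countable) :
    ∃ Φ : S ≃ (ℕ → ℕ × ℕ),
      (∀ p : S, ∀ n, ∃ a b, (p : ℝ) ∈ Ico a b ∧ ∀ x : S, (x : ℝ) ∈ Ico a b → Φ x n = Φ p n) ∧
      ∀ p : S, ∀ ε > 0, ∃ N, ∀ n ≥ N, ∃ m, ∀ x : S, (∀ i < n, Φ x i = Φ p i) →
        m ≤ (Φ x n).1 → (x : ℝ) ∈ Ico (p : ℝ) (p + ε) := by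
  obtain ⟨g, hg⟩ := countable_iff_exists_injOn.1 hS
  let T : ℕ → Set ℝ := fun n => {q | q ∈ Sᶜ ∧ g q = n}
  have hT : ∀ n, (T n).Subsingleton := fun n x hx y hy => hg hx.1 hy.1 (hx.2.trans hy.2.symm)
  have hpos : ∀ n : ℕ, (0 : ℝ) < (1 / 2) ^ n := fun n => by positivity
  choose l r hpart hlen hIcc hgrow using fun (n : ℕ) (I : {I // Cls I}) =>
    exists_split I.1 I.2 (T n) (hT n) ((1 / 2) ^ n) (hpos n)
  let nxt : ℕ → {I // Cls I} → ℕ × ℕ → {I // Cls I} := fun n I k =>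
    ⟨Ico (l n I k) (r n I k), Or.inr ⟨_, _, (hpart n I).1 k, rfl⟩⟩
  let D : (ℕ → ℕ × ℕ) → ℕ → {I // Cls I} := fun f n =>
    Nat.rec ⟨univ, Or.inl rfl⟩ (fun n I => nxt n I (f n)) n
  have hD0 : ∀ f, (D f 0).1 = univ := fun f => rfl
  have hDs : ∀ f n, D f (n + 1) = nxt n (D f n) (f n) := fun f n => rfl
  have hsub : ∀ f n x, x ∈ (D f (n + 1)).1 → x ∈ (D f n).1 ∧ x ∉ T n := fun f n x hx =>
    ((hpart n (D f n)).2.1 x).2 ⟨f n, hx⟩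
  have hcongr : ∀ f f' n, (∀ i < n, f i = f' i) → D f n = D f' n := by
    intro f f' n
    induction n with
    | zero => intro _; rfl
    | succ n ih =>
      intro h
      rw [hDs, hDs, ih (fun i hi => h i (by omega)), h n (by omega)]
  have hdet : ∀ f f' x n, x ∈ (D f n).1 → x ∈ (D f' n).1 → ∀ i < n, f i = f' i := by
    intro f f' x n
    induction n with
    | zero => intro _ _ i hi; omega
    | succ n ih =>
      intro h h' i hi
      have h1 := ih (hsub _ _ _ h).1 (hsub _ _ _ h').1
      rcases Nat.lt_succ_iff_lt_or_eq.1 hi with h2 | rfl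
      · exact h1 i h2
      · have h3 := hcongr _ _ _ h1
        rw [hDs] at h h'
        rw [← h3] at h'
        exact (hpart i (D f i)).2.2 x _ _ h h'
  have huniq : ∀ f x y, (∀ n, x ∈ (D f n).1) → (∀ n, y ∈ (D f n).1) → x = y := by
    intro f x y hx hy
    have hb : ∀ n, |x - y| ≤ (1 / 2) ^ n := by
      intro n
      have h1 := hx (n + 1)
      have h2 := hy (n + 1)
      have h3 := hlen n (D f n) (f n)
      rw [abs_le]
      constructor <;> linarith [h1.1, h1.2, h2.1, h2.2]
    have h0 : |x - y| ≤ 0 := by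
      refine ge_of_tendsto' (tendsto_pow_atTop_nhds_zero_of_lt_one (r := (1/2 : ℝ))
        (by norm_num) (by norm_num)) hb
    have := abs_nonpos_iff.1 h0
    linarith
  have hex : ∀ f, ∃ x : S, ∀ n, (x : ℝ) ∈ (D f n).1 := by
    intro f
    let K : ℕ → Set ℝ := fun n => Icc (l n (D f n) (f n)) (r n (D f n) (f n))
    have hK : (⋂ n, K n).Nonempty := by
      apply IsCompact.nonempty_iInter_of_sequence_nonempty_isCompact_isClosed
      · intro n x hx
        have : x ∈ (D f (n + 1)).1 := hIcc (n + 1) (D f (n + 1)) (f (n + 1)) hx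
        exact ⟨this.1, this.2.le⟩
      · intro n; exact nonempty_Icc.2 ((hpart n (D f n)).1 _).le
      · exact isCompact_Icc
      · intro n; exact isClosed_Icc
    obtain ⟨x, hx⟩ := hK
    have hxD : ∀ n, x ∈ (D f n).1 := fun n => hIcc n (D f n) (f n) (mem_iInter.1 hx n)
    refine ⟨⟨x, ?_⟩, hxD⟩
    by_contra hxS
    exact (hsub f (g x) x (hxD (g x + 1))).2 ⟨hxS, rfl⟩
  choose G hG using hex
  have hGbij : Function.Bijective G := by
    constructor
    · intro f f' h
      funext i
      have h1 := hG f (i + 1)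
      rw [h] at h1
      exact hdet f f' _ (i + 1) h1 (hG f' (i + 1)) i (by omega)
    · intro x
      have hpick : ∀ (n : ℕ) (I : {I : {I // Cls I} // (x : ℝ) ∈ I.1}),
          ∃ k, (x : ℝ) ∈ (nxt n I.1 k).1 := by
        intro n I
        exact ((hpart n I.1).2.1 x).1 ⟨I.2, fun h => h.1 x.2⟩
      choose pick hpick using hpick
      let st : ℕ → {I : {I // Cls I} // (x : ℝ) ∈ I.1} := fun n =>
        Nat.rec ⟨⟨univ, Or.inl rfl⟩, mem_univ _⟩
          (fun n I => ⟨nxt n I.1 (pick n I), hpick n I⟩) n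
      let f : ℕ → ℕ × ℕ := fun n => pick n (st n)
      have hst : ∀ n, D f n = (st n).1 := by
        intro n
        induction n with
        | zero => rfl
        | succ n ih => rw [hDs, ih]
      refine ⟨f, Subtype.ext (huniq f _ _ (hG f) fun n => ?_)⟩
      rw [hst]; exact (st n).2
  let Φ : S ≃ (ℕ → ℕ × ℕ) := (Equiv.ofBijective G hGbij).symm
  have hΦ : ∀ (x : S) n, (x : ℝ) ∈ (D (Φ x) n).1 := by
    intro x n
    have h1 := hG (Φ x) n
    have h2 : G (Φ x) = x := (Equiv.ofBijective G hGbij).apply_symm_apply x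
    rwa [h2] at h1
  refine ⟨Φ, ?_, ?_⟩
  · intro p n
    refine ⟨_, _, hΦ p (n + 1), fun x hx => ?_⟩
    exact hdet _ _ _ (n + 1) (hΦ x (n + 1)) hx n (by omega)
  · intro p ε hε
    obtain ⟨N, hN⟩ := exists_pow_lt_of_lt_one hε (show (1 / 2 : ℝ) < 1 by norm_num)
    refine ⟨N + 1, fun n hn => ?_⟩
    obtain ⟨n, rfl⟩ : ∃ k, n = k + 1 := ⟨n - 1, by omega⟩
    have hp := hΦ p (n + 1)
    have hn' : (1 / 2 : ℝ) ^ n ≤ (1 / 2) ^ N :=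
      pow_le_pow_of_le_one (by norm_num) (by norm_num) (by omega)
    obtain ⟨m, hm⟩ := hgrow (n + 1) (D (Φ p) (n + 1)) _ _ rfl p hp.2
    refine ⟨m, fun x hx hmx => ?_⟩
    have he := hcongr _ _ _ hx
    have hx1 := hΦ x (n + 2)
    have hx0 := hΦ x (n + 1)
    rw [he] at hx0
    have h1 := hm (Φ x (n + 1)) hmx
    rw [hDs, he] at hx1
    have h3 := hlen n (D (Φ p) n) (Φ p n)
    exact ⟨h1.trans hx1.1, by linarith [hx0.2, hp.1]⟩

theorem sorg_nhds {V : Set SorgLine} (hV : IsOpen V) :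
    ∀ p : ℝ, p ∈ (V : Set ℝ) → ∃ ε > 0, Ico p (p + ε) ⊆ (V : Set ℝ) := by
  induction hV with
  | basic s hs =>
    obtain ⟨a, b, rfl⟩ := hs
    intro p hp
    refine ⟨b - p, sub_pos.2 hp.2, fun x hx => ⟨hp.1.trans hx.1, by linarith [hx.2]⟩⟩
  | univ => intro p _; exact ⟨1, one_pos, fun x _ => trivial⟩
  | inter s t _ _ ihs iht =>
    intro p hp
    obtain ⟨ε, hε, h1⟩ := ihs p hp.1
    obtain ⟨δ, hδ, h2⟩ := iht p hp.2
    refine ⟨min ε δ, lt_min hε hδ, fun x hx => ⟨h1 ⟨hx.1, ?_⟩, h2 ⟨hx.1, ?_⟩⟩⟩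
    · linarith [hx.2, min_le_left ε δ]
    · linarith [hx.2, min_le_right ε δ]
  | sUnion 𝒮 _ ih =>
    rintro p ⟨s, hs, hp⟩
    obtain ⟨ε, hε, h⟩ := ih s hs p hp
    exact ⟨ε, hε, fun x hx => ⟨s, hs, h hx⟩⟩

theorem good_sorg {X : Type u} [TopologicalSpace X] (S : Set SorgLine) (hS : Sᶜ.Countable)
    (h : X ≃ₜ ↥S) : ∃ Φ : X ≃ (ℕ → ℕ × ℕ), Good Φ := by
  obtain ⟨Φ, h1, h2⟩ := real_code S hS
  refine ⟨h.toEquiv.trans Φ, ?_, ?_⟩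
  · have hc : ∀ n, Continuous (fun x : ↥S => Φ x n) := by
      intro n
      refine IsLocallyConstant.continuous ?_
      rw [IsLocallyConstant.iff_exists_open]
      intro p
      obtain ⟨a, b, hp, hx⟩ := h1 p n
      let W : Set SorgLine := (Ico a b : Set ℝ)
      have hW : IsOpen W := TopologicalSpace.isOpen_generateFrom_of_mem ⟨a, b, rfl⟩
      exact ⟨Subtype.val ⁻¹' W, hW.preimage continuous_subtype_val, hp, fun x hxW => hx x hxW⟩
    exact continuous_pi fun n => (hc n).comp h.continuous
  · intro p U hU
    have hU' : h.symm ⁻¹' U ∈ nhds (h p) := by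
      apply h.symm.continuous.continuousAt
      simpa using hU
    rw [mem_nhds_subtype] at hU'
    obtain ⟨V, hV, hVU⟩ := hU'
    obtain ⟨W, hWV, hWo, hpW⟩ := mem_nhds_iff.1 hV
    obtain ⟨ε, hε, hI⟩ := sorg_nhds hWo (h p).1 hpW
    obtain ⟨N, hN⟩ := h2 (h p) ε hε
    refine ⟨N, fun n hn => ?_⟩
    obtain ⟨m, hm⟩ := hN n hn
    refine ⟨m, fun x hx hmx => ?_⟩
    have h3 := hm (h x) hx hmx
    have h4 : h x ∈ h.symm ⁻¹' U := hVU (hWV (hI h3))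
    simpa using h4

end PT

/-- Corollary `cor.rise.in.N.and.sorg.line` of the paper: each factor is
(homeomorphic to) the Baire space or to a co-countable subspace of the
Sorgenfrey line. -/
theorem product_of_baire_and_cocountable_sorgenfrey_has_piTree
    {A : Type} [Countable A] [Nonempty A]
    {X : A → Type u} [∀ a, TopologicalSpace (X a)]
    (hX : ∀ a, Nonempty (X a ≃ₜ (ℕ → ℕ)) ∨
      ∃ S : Set SorgLine, Sᶜ.Countable ∧ Nonempty (X a ≃ₜ ↥S)) :
    ∃ F : FoliageTree (∀ a, X a), F.IsPiTree := by
  have h : ∀ a, ∃ Φ : X a ≃ (ℕ → ℕ × ℕ), PT.Good Φ := by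
    intro a
    rcases hX a with ⟨⟨h⟩⟩ | ⟨S, hS, ⟨h⟩⟩
    · exact PT.good_baire h
    · exact PT.good_sorg S hS h
  choose Φ hΦ using h
  exact PT.product_good Φ hΦ
end

section
/- For every natural number n ≥ 1, the finite power R_S^n of the Sorgenfrey line and the finite power I_S^n of the irrational Sorgenfrey line have a π-tree. -/
open Set

universe u v

/-- The set of irrational points of the Sorgenfrey line; the irrational
Sorgenfrey line is the corresponding subspace. -/
def IrrSorg : Set SorgLine := {x : SorgLine | Irrational (show ℝ from x)}

namespace PiTreeProof

/-- `s` is an initial segment of the infinite sequence `f`. -/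
def IsPre (s : List ℕ) (f : ℕ → ℕ) : Prop := ∀ i, ∀ h : i < s.length, s[i] = f i

lemma IsPre.of_shorter {s t : List ℕ} {f : ℕ → ℕ} (ht : IsPre t f) (h : s <+: t) : IsPre s f := by
  intro i hi
  rw [h.getElem hi]
  exact ht i _

lemma IsPre.comparable {s t : List ℕ} {f : ℕ → ℕ} (hs : IsPre s f) (ht : IsPre t f)
    (h : s.length ≤ t.length) : s <+: t := by
  rw [List.prefix_iff_eq_take]
  apply List.ext_getElem
  · simp [h]
  · intro i h1 h2
    rw [List.getElem_take, hs i h1, ht i (by omega)]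

/-- The initial segment of length `m`. -/
def seg (f : ℕ → ℕ) (m : ℕ) : List ℕ := List.ofFn (fun i : Fin m => f i)

lemma isPre_seg (f : ℕ → ℕ) (m : ℕ) : IsPre (seg f m) f := by
  intro i hi
  simp [seg]

lemma length_seg (f : ℕ → ℕ) (m : ℕ) : (seg f m).length = m := by simp [seg]

lemma isPre_append {s : List ℕ} {k : ℕ} {f : ℕ → ℕ} :
    IsPre (s ++ [k]) f ↔ IsPre s f ∧ f s.length = k := by
  constructor
  · intro h
    refine ⟨h.of_shorter (List.prefix_append _ _), ?_⟩
    have := h s.length (by simp)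
    simpa using this.symm
  · rintro ⟨h, hk⟩ i hi
    rcases Nat.lt_or_ge i s.length with h1 | h1
    · rw [List.getElem_append_left h1]
      exact h i h1
    · have : i = s.length := by simp at hi; omega
      subst this
      simp [hk]

lemma seqLT_length {a b : List ℕ} (h : seqLT a b) : a.length < b.length := by
  rcases lt_or_eq_of_le h.1.length_le with h1 | h1
  · exact h1
  · exact absurd (h.1.eq_of_length h1) h.2

lemma seqLT_of_shorter {a b : List ℕ} (h : a <+: b) (hl : a.length < b.length) : seqLT a b :=
  ⟨h, fun e => by simp [e] at hl⟩

lemma seqLT_trans {a b c : List ℕ} (h : seqLT a b) (h' : seqLT b c) : seqLT a c :=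
  seqLT_of_shorter (h.1.trans h'.1) ((seqLT_length h).trans (seqLT_length h'))

/-- The foliage tree coming from a coding by infinite sequences. -/
def codeTree {X : Type u} (ψ : X → ℕ → ℕ) : FoliageTree X where
  Node := List ℕ
  lt := seqLT
  lt_irrefl := fun a h => h.2 rfl
  lt_trans := seqLT_trans
  wellOrdered := fun a =>
    { wf := Subrelation.wf (r := InvImage (· < ·) (fun x : {b : List ℕ // seqLT b a} => x.1.length))
        (fun {x y} h => seqLT_length h) (InvImage.wf _ Nat.lt_wfRel.wf)
      trichotomous := by
        intro x y h1 h2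
        apply Subtype.ext
        rcases lt_trichotomy x.1.length y.1.length with h | h | h
        · exact absurd (seqLT_of_shorter
            (List.prefix_of_prefix_length_le x.2.1 y.2.1 h.le) h) h1
        · exact (List.prefix_of_prefix_length_le x.2.1 y.2.1 h.le).eq_of_length h
        · exact absurd (seqLT_of_shorter
            (List.prefix_of_prefix_length_le y.2.1 x.2.1 h.le) h) h2 }
  leaf := fun s => {x | IsPre s (ψ x)}

lemma codeTree_sons {X : Type u} (ψ : X → ℕ → ℕ) (s : List ℕ) :
    (codeTree ψ).Sons s = {t : List ℕ | ∃ k : ℕ, t = s ++ [k]} := by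
  ext t
  constructor
  · rintro ⟨h1, h2⟩
    obtain ⟨⟨r, hr⟩, hne⟩ := h1
    cases r with
    | nil => exact absurd (by simpa using hr) hne
    | cons k r =>
      refine ⟨k, ?_⟩
      by_contra hcon
      apply h2
      refine ⟨s ++ [k], seqLT_of_shorter (List.prefix_append _ _) (by simp), ⟨⟨r, ?_⟩, ?_⟩⟩
      · simpa using hr
      · exact fun e => hcon e.symm
  · rintro ⟨k, rfl⟩
    refine ⟨seqLT_of_shorter (List.prefix_append _ _) (by simp), ?_⟩
    rintro ⟨t, h1, h2⟩
    have h1 := seqLT_length h1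
    have h2 := seqLT_length h2
    simp at h2
    omega

theorem codeTree_isPiTree {X : Type u} [TopologicalSpace X] (ψ : X → ℕ → ℕ)
    (hbij : Function.Bijective ψ) (hcont : ∀ m, Continuous fun x => ψ x m)
    (hgrow : ∀ p : X, ∀ U ∈ nhds p, ∃ m K, ∀ x, (∀ i < m, ψ x i = ψ p i) → K ≤ ψ x m → x ∈ U) :
    (codeTree ψ).IsPiTree := by
  refine ⟨⟨?_, ?_, ⟨RelIso.refl _⟩, ⟨⟨([] : List ℕ)⟩, ?_⟩, ([] : List ℕ), ?_, ?_⟩, ?_⟩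
  · intro (s : List ℕ)
    change IsOpen {x | ∀ i, ∀ h : i < s.length, s[i] = ψ x i}
    have : {x | ∀ i, ∀ h : i < s.length, s[i] = ψ x i} =
        ⋂ i : Fin s.length, (fun x => ψ x i) ⁻¹' {s[i]} := by
      ext x
      simp only [mem_ofPred_eq, mem_iInter, mem_preimage, mem_singleton_iff]
      exact ⟨fun h i => (h i i.2).symm, fun h i hi => (h ⟨i, hi⟩).symm⟩
    rw [this]
    exact isOpen_iInter_of_finite fun i => (isOpen_discrete _).preimage (hcont i)
  · intro (s : List ℕ) _
    constructor
    · ext x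
      rw [codeTree_sons]
      simp only [mem_iUnion, exists_prop]
      constructor
      · intro hx
        exact ⟨s ++ [ψ x s.length], ⟨_, rfl⟩, isPre_append.2 ⟨hx, rfl⟩⟩
      · rintro ⟨_, ⟨k, rfl⟩, hx⟩
        exact (isPre_append.1 hx).1
    · rw [codeTree_sons]
      rintro _ ⟨k, rfl⟩ _ ⟨l, rfl⟩ hne
      rw [Set.disjoint_left]
      intro x hx hx'
      apply hne
      rw [← (isPre_append.1 hx).2, ← (isPre_append.1 hx').2]
  · rintro (B : Set (List ℕ)) ⟨hch, hmax⟩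
    classical
    have key : ∃ f : ℕ → ℕ, ∀ s ∈ B, IsPre s f := by
      refine ⟨fun i => if h : ∃ s ∈ B, i < s.length then
        (h.choose)[i]'(h.choose_spec.2) else 0, ?_⟩
      intro s hs i hi
      have h : ∃ s ∈ B, i < s.length := ⟨s, hs, hi⟩
      simp only [dif_pos h]
      have h2 : ∀ t ∈ B, ∀ ht : i < t.length, s[i] = t[i] := by
        intro t htB ht
        rcases hch s hs t htB with h3 | h3 | h3
        · exact h3.1.getElem hi
        · subst h3; rfl
        · exact (h3.1.getElem ht).symm
      exact h2 _ h.choose_spec.1 h.choose_spec.2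
    obtain ⟨f, hf⟩ := key
    have hB : B = {s | IsPre s f} := by
      apply hmax
      · intro s hs t ht
        rcases lt_trichotomy s.length t.length with h | h | h
        · exact Or.inl (seqLT_of_shorter (IsPre.comparable hs ht h.le) h)
        · exact Or.inr (Or.inl ((IsPre.comparable hs ht h.le).eq_of_length h))
        · exact Or.inr (Or.inr (seqLT_of_shorter (IsPre.comparable ht hs h.le) h))
      · exact hf
    obtain ⟨p, hp⟩ := hbij.2 f
    refine ⟨p, ?_⟩
    ext x
    simp only [mem_iInter, mem_singleton_iff]
    constructor
    · intro h
      apply hbij.1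
      rw [hp]
      funext i
      have h1 : IsPre (seg f (i + 1)) (ψ x) := h (seg f (i + 1)) (by rw [hB]; exact isPre_seg _ _)
      have h2 := h1 i (by simp [length_seg])
      rw [← h2, isPre_seg f (i + 1) i (by simp [length_seg])]
    · rintro rfl s hs
      change IsPre s (ψ x)
      rw [hp]
      exact hf s hs
  · intro (s : List ℕ)
    rcases s with _ | ⟨a, s⟩
    · exact Or.inl rfl
    · exact Or.inr (seqLT_of_shorter (List.nil_prefix) (by simp))
  · ext x
    simp only [mem_univ, iff_true]
    intro i hi
    simp at hi
  · intro p U hU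
    obtain ⟨m, K, h⟩ := hgrow p U hU
    refine ⟨seg (ψ p) m, isPre_seg _ _, ?_⟩
    rintro D rfl -
    refine ⟨_, ⟨{t : List ℕ | ∃ k : ℕ, K ≤ k ∧ t = seg (ψ p) m ++ [k]}, ?_, ?_, rfl⟩, ?_, ?_⟩
    · rw [codeTree_sons]
      rintro _ ⟨k, -, rfl⟩
      exact ⟨k, rfl⟩
    · rw [codeTree_sons]
      refine ((Set.finite_lt_nat K).image (fun k => seg (ψ p) m ++ [k])).subset ?_
      rintro _ ⟨⟨k, rfl⟩, hk⟩
      refine ⟨k, ?_, rfl⟩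
      by_contra hc
      exact hk ⟨k, by simpa using hc, rfl⟩
    · obtain ⟨x, hx⟩ := hbij.2 (fun i => if i < m then ψ p i else K)
      refine ⟨x, ?_⟩
      simp only [mem_iUnion]
      refine ⟨seg (ψ p) m ++ [K], ⟨K, le_rfl, rfl⟩, ?_⟩
      refine isPre_append.2 ⟨?_, ?_⟩
      · intro i hi
        have hi' : i < m := by simpa [length_seg] using hi
        rw [isPre_seg _ _ i hi, hx]
        simp [hi']
      · rw [hx, length_seg]
        simp
    · intro x hx
      simp only [mem_iUnion] at hx
      obtain ⟨_, ⟨k, hk, rfl⟩, hx⟩ := hx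
      obtain ⟨h1, h2⟩ := isPre_append.1 hx
      rw [length_seg] at h2
      refine h x (fun i hi => ?_) (h2 ▸ hk)
      rw [← h1 i (by simpa [length_seg]), isPre_seg _ _ i]

/-- A good coding of a space by sequences of pairs. -/
def GoodCode {X : Type u} [TopologicalSpace X] (φ : X → ℕ → ℕ × ℕ) : Prop :=
  Function.Bijective φ ∧ (∀ m, Continuous fun x => φ x m) ∧
    ∀ p : X, ∀ U ∈ nhds p, ∃ N, ∀ m ≥ N, ∃ K, ∀ x,
      (∀ i < m, φ x i = φ p i) → K ≤ (φ x m).1 → x ∈ U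

theorem GoodCode.exists_piTree {X : Type u} [TopologicalSpace X] {φ : X → ℕ → ℕ × ℕ}
    (h : GoodCode φ) : ∃ F : FoliageTree X, F.IsPiTree := by
  obtain ⟨hb, hc, hg⟩ := h
  refine ⟨codeTree (fun x i => if i % 2 = 0 then (φ x (i / 2)).1 else (φ x (i / 2)).2),
    codeTree_isPiTree _ ⟨?_, ?_⟩ ?_ ?_⟩
  · intro x y hxy
    apply hb.1
    funext m
    have h1 := congrFun hxy (2 * m)
    have h2 := congrFun hxy (2 * m + 1)
    have e : (2 * m + 1) / 2 = m := by omega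
    simp [e] at h1 h2
    exact Prod.ext h1 h2
  · intro f
    obtain ⟨x, hx⟩ := hb.2 (fun m => (f (2 * m), f (2 * m + 1)))
    refine ⟨x, ?_⟩
    funext i
    simp only [hx]
    split_ifs with h
    · congr 1; omega
    · congr 1; omega
  · intro m
    by_cases h : m % 2 = 0
    · simp only [h, if_true]
      exact continuous_fst.comp (hc _)
    · simp only [h, if_false]
      exact continuous_snd.comp (hc _)
  · intro p U hU
    obtain ⟨N, hN⟩ := hg p U hU
    obtain ⟨K, hK⟩ := hN N le_rfl
    refine ⟨2 * N, K, fun x h1 h2 => hK x (fun i hi => ?_) (by simpa using h2)⟩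
    have h3 := h1 (2 * i) (by omega)
    have h4 := h1 (2 * i + 1) (by omega)
    have e : (2 * i + 1) / 2 = i := by omega
    simp [e] at h3 h4
    exact Prod.ext h3 h4

lemma exists_minEquiv (n : ℕ) (hn : 1 ≤ n) :
    ∃ e : (Fin n → ℕ × ℕ) ≃ ℕ × ℕ, ∀ v i, (e v).1 ≤ (v i).1 := by
  have : Nonempty (Fin n) := ⟨⟨0, hn⟩⟩
  let μ : (Fin n → ℕ × ℕ) → ℕ := fun v => Finset.univ.inf' Finset.univ_nonempty fun i => (v i).1
  have hinf : ∀ k, Infinite {v // μ v = k} := by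
    intro k
    refine Infinite.of_injective (fun j : ℕ => (⟨fun _ => (k, j), by simp [μ]⟩ : {v // μ v = k})) ?_
    intro a b hab
    have := congrFun (congrArg Subtype.val hab) ⟨0, hn⟩
    simpa using this
  have hd : ∀ k, Nonempty ({v // μ v = k} ≃ ℕ) := fun k => by
    have := hinf k
    obtain ⟨d⟩ := nonempty_denumerable {v // μ v = k}
    exact ⟨Denumerable.eqv _⟩
  obtain ⟨g⟩ := Classical.nonempty_pi.2 hd
  refine ⟨(Equiv.sigmaFiberEquiv μ).symm.trans
    ((Equiv.sigmaCongrRight g).trans (Equiv.sigmaEquivProd ℕ ℕ)), ?_⟩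
  intro v i
  have : (((Equiv.sigmaFiberEquiv μ).symm.trans
    ((Equiv.sigmaCongrRight g).trans (Equiv.sigmaEquivProd ℕ ℕ))) v).1 = μ v := by
    simp [Equiv.sigmaFiberEquiv]
  rw [this]
  exact Finset.inf'_le (fun i => (v i).1) (Finset.mem_univ i)

theorem GoodCode.pi {X : Type u} [TopologicalSpace X] {φ : X → ℕ → ℕ × ℕ}
    (h : GoodCode φ) (n : ℕ) (hn : 1 ≤ n) :
    ∃ Φ : (Fin n → X) → ℕ → ℕ × ℕ, GoodCode Φ := by
  obtain ⟨hb, hc, hg⟩ := h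
  obtain ⟨e, he⟩ := exists_minEquiv n hn
  refine ⟨fun x m => e fun i => φ (x i) m, ⟨?_, ?_⟩, ?_, ?_⟩
  · intro x y hxy
    funext i
    apply hb.1
    funext m
    exact congrFun (e.injective (congrFun hxy m)) i
  · intro f
    choose x hx using fun i : Fin n => hb.2 (fun m => e.symm (f m) i)
    refine ⟨x, ?_⟩
    funext m
    simp [hx]
  · intro m
    refine (continuous_of_discreteTopology (f := e)).comp ?_
    exact continuous_pi fun i => (hc m).comp (continuous_apply i)
  · intro p U hU
    rw [nhds_pi, Filter.mem_pi] at hU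
    obtain ⟨I, -, t, ht, hsub⟩ := hU
    choose N hN using fun i => hg (p i) (t i) (ht i)
    refine ⟨Finset.univ.sup N, fun m hm => ?_⟩
    choose K hK using fun i => hN i m ((Finset.le_sup (Finset.mem_univ i)).trans hm)
    refine ⟨Finset.univ.sup K, fun x h1 h2 => hsub fun i _ => hK i (x i) ?_ ?_⟩
    · intro j hj
      exact congrFun (e.injective (h1 j hj)) i
    · exact ((Finset.le_sup (Finset.mem_univ i)).trans h2).trans (he _ i)

/-- A self-similar system of contractions describing `Y ⊆ [0, 1)`. -/
structure Sys (Y : Set ℝ) (h : ℕ × ℕ → ℝ → ℝ) : Prop where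
  sub : Y ⊆ Ico 0 1
  maps : ∀ d, ∀ u ∈ Icc (0 : ℝ) 1, h d u ∈ Icc (0 : ℝ) 1
  mono : ∀ d, StrictMonoOn (h d) (Icc 0 1)
  expand : ∀ d, ∀ u ∈ Icc (0 : ℝ) 1, ∀ v ∈ Icc (0 : ℝ) 1,
    |h d u - h d v| + |h d u - h d v| ^ 2 ≤ |u - v|
  cover : ∀ x ∈ Y, ∃ d, ∃ v ∈ Y, h d v = x
  onto : ∀ d, ∀ x ∈ Y, h d 0 ≤ x → x < h d 1 → ∃ v ∈ Y, h d v = x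
  uniq : ∀ d d', ∀ u ∈ Y, ∀ v ∈ Y, h d u = h d' v → d = d'
  order : ∀ d d', d.1 < d'.1 → ∀ u ∈ Y, ∀ v ∈ Y, h d u ≤ h d' v
  limit : ∀ (x : ℕ → ℝ) (d : ℕ → ℕ × ℕ), (∀ i, x i ∈ Icc (0 : ℝ) 1) →
    (∀ i, x i = h (d i) (x (i + 1))) → x 0 ∈ Y

/-- Finite approximations of the point with a given itinerary. -/
def approx (h : ℕ × ℕ → ℝ → ℝ) : ℕ → (ℕ → ℕ × ℕ) → ℝ
  | 0, _ => 0
  | m + 1, d => h (d 0) (approx h m fun i => d (i + 1))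

namespace Sys

lemma subI {Y : Set ℝ} {h : ℕ × ℕ → ℝ → ℝ} (S : Sys Y h) {x : ℝ} (hx : x ∈ Y) : x ∈ Icc (0 : ℝ) 1 := ⟨(S.sub hx).1, (S.sub hx).2.le⟩

lemma exists_coding {Y : Set ℝ} {h : ℕ × ℕ → ℝ → ℝ} (S : Sys Y h) : ∃ (δ : Y → ℕ × ℕ) (T : Y → Y), ∀ x, h (δ x) (T x) = x := by
  choose δ v hv hx using fun x : Y => S.cover x x.2
  exact ⟨δ, fun x => ⟨v x, hv x⟩, hx⟩

lemma approx_mem {Y : Set ℝ} {h : ℕ × ℕ → ℝ → ℝ} (S : Sys Y h) (m : ℕ) : ∀ d, approx h m d ∈ Icc (0 : ℝ) 1 := by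
  induction m with
  | zero => intro d; simp [approx]
  | succ m ih => intro d; exact S.maps _ _ (ih _)

lemma approx_mono {Y : Set ℝ} {h : ℕ × ℕ → ℝ → ℝ} (S : Sys Y h) (m : ℕ) : ∀ d, approx h m d ≤ approx h (m + 1) d := by
  induction m with
  | zero => intro d; exact (S.approx_mem 1 d).1
  | succ m ih =>
    intro d
    exact (S.mono _).monotoneOn (S.approx_mem _ _) (S.approx_mem _ _) (ih _)

lemma cont {Y : Set ℝ} {h : ℕ × ℕ → ℝ → ℝ} (S : Sys Y h) (d : ℕ × ℕ) : ContinuousOn (h d) (Icc 0 1) := by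
  have : LipschitzOnWith 1 (h d) (Icc 0 1) := by
    apply LipschitzOnWith.of_dist_le_mul
    intro x hx y hy
    rw [Real.dist_eq, Real.dist_eq]
    have := S.expand d x hx y hy
    simp only [NNReal.coe_one, one_mul]
    nlinarith [sq_nonneg |h d x - h d y|]
  exact this.continuousOn

lemma exists_limit {Y : Set ℝ} {h : ℕ × ℕ → ℝ → ℝ} (S : Sys Y h) : ∃ L : (ℕ → ℕ × ℕ) → ℝ, (∀ d, L d ∈ Icc (0 : ℝ) 1) ∧
    ∀ d, L d = h (d 0) (L fun i => d (i + 1)) := by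
  have key : ∀ d, ∃ l ∈ Icc (0 : ℝ) 1, Filter.Tendsto (fun m => approx h m d) Filter.atTop (nhds l) := by
    intro d
    have hb : BddAbove (range fun m => approx h m d) :=
      ⟨1, by rintro _ ⟨m, rfl⟩; exact (S.approx_mem m d).2⟩
    have ht := tendsto_atTop_ciSup (monotone_nat_of_le_succ fun m => S.approx_mono m d) hb
    exact ⟨_, isClosed_Icc.mem_of_tendsto ht (Filter.Eventually.of_forall fun m => S.approx_mem m d), ht⟩
  choose L hL hT using key
  refine ⟨L, hL, fun d => ?_⟩
  refine tendsto_nhds_unique ((Filter.tendsto_add_atTop_iff_nat 1).2 (hT d)) ?_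
  have h1 := S.cont (d 0) _ (hL fun i => d (i + 1))
  exact Filter.Tendsto.comp h1 (tendsto_nhdsWithin_iff.2
    ⟨hT _, Filter.Eventually.of_forall fun m => S.approx_mem m _⟩)

/-- Existence of a good coding of `Y`. -/
theorem exists_code {Y : Set ℝ} {h : ℕ × ℕ → ℝ → ℝ} (S : Sys Y h) : ∃ φ : Y → ℕ → ℕ × ℕ, Function.Bijective φ ∧
    (∀ m (x : Y), ∃ ε > 0, ∀ z : Y, (x : ℝ) ≤ z → (z : ℝ) < x + ε → φ z m = φ x m) ∧
    (∀ m (x z : Y), (∀ i < m, φ x i = φ z i) → (m : ℝ) * |(x : ℝ) - z| ^ 2 ≤ 1) ∧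
    (∀ m (x z : Y), (∀ i < m, φ x i = φ z i) → (φ x m).1 < (φ z m).1 → (x : ℝ) ≤ z) := by
  obtain ⟨δ, T, hT⟩ := S.exists_coding
  have hδ : ∀ (x v : Y) d, h d v = x → δ x = d ∧ T x = v := by
    intro x v d hx
    have e : δ x = d := S.uniq _ _ _ (T x).2 _ v.2 ((hT x).trans hx.symm)
    refine ⟨e, Subtype.ext ((S.mono d).injOn (S.subI (T x).2) (S.subI v.2) ?_)⟩
    rw [hx, ← e, hT]
  have hd : ∀ m (x z : Y), (∀ i < m, δ (T^[i] x) = δ (T^[i] z)) →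
      |(x : ℝ) - z| + m * |(x : ℝ) - z| ^ 2 ≤ 1 := by
    have aux : ∀ m (x z : Y), (∀ i < m, δ (T^[i] x) = δ (T^[i] z)) →
      |(x : ℝ) - z| + m * |(x : ℝ) - z| ^ 2 ≤ |((T^[m] x : Y) : ℝ) - (T^[m] z : Y)| := by
      intro m
      induction m with
      | zero => intro x z _; simp
      | succ m ih =>
        intro x z hxz
        have h1 := ih (T x) (T z) (fun i hi => by
          have := hxz (i + 1) (by omega)
          simpa only [Function.iterate_succ_apply] using this)
        have h0 : δ x = δ z := hxz 0 (by omega)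
        have h2 := S.expand (δ x) (T x) (S.subI (T x).2) (T z) (S.subI (T z).2)
        rw [hT, h0, hT] at h2
        simp only [Function.iterate_succ_apply]
        push_cast
        refine le_trans ?_ h1
        have h3 : |(x : ℝ) - z| ≤ |(T x : ℝ) - T z| := by nlinarith [sq_nonneg |(x : ℝ) - z|]
        have h4 : |(x : ℝ) - z| ^ 2 ≤ |(T x : ℝ) - T z| ^ 2 := by gcongr
        have h5 : (m : ℝ) * |(x : ℝ) - z| ^ 2 ≤ m * |(T x : ℝ) - T z| ^ 2 := by gcongr
        linarith
    intro m x z hxz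
    refine (aux m x z hxz).trans ?_
    have h1 := S.subI (T^[m] x).2
    have h2 := S.subI (T^[m] z).2
    rw [abs_le]
    constructor <;> linarith [h1.1, h1.2, h2.1, h2.2]
  have hstep : ∀ (x : Y) (ε : ℝ), 0 < ε → ∃ η > 0, ∀ z : Y, (x : ℝ) ≤ z → (z : ℝ) < x + η →
      δ z = δ x ∧ (T x : ℝ) ≤ T z ∧ (T z : ℝ) < T x + ε := by
    intro x ε hε
    have hu := S.sub (T x).2
    set w : ℝ := min ((T x : ℝ) + ε) 1 with hw
    have hw1 : (T x : ℝ) < w := lt_min (by linarith) hu.2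
    have hwI : w ∈ Icc (0 : ℝ) 1 := ⟨by linarith [hu.1], min_le_right _ _⟩
    have hlt : (x : ℝ) < h (δ x) w := by
      conv_lhs => rw [← hT x]
      exact S.mono _ (S.subI (T x).2) hwI hw1
    refine ⟨h (δ x) w - x, by linarith, fun z h1 h2 => ?_⟩
    have h3 : (z : ℝ) < h (δ x) w := by linarith
    obtain ⟨v, hv, hvz⟩ := S.onto (δ x) z z.2
      (le_trans (by
        conv_rhs => rw [← hT x]
        exact (S.mono _).monotoneOn (by simp) (S.subI (T x).2) hu.1) h1)
      (lt_of_lt_of_le h3 ((S.mono _).monotoneOn hwI (by simp) hwI.2))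
    obtain ⟨e1, e2⟩ := hδ z ⟨v, hv⟩ _ hvz
    refine ⟨e1, ?_, ?_⟩
    · rw [e2]
      rw [← hT x, ← hvz] at h1
      exact ((S.mono _).le_iff_le (S.subI (T x).2) (S.subI hv)).1 h1
    · rw [e2]
      rw [← hvz] at h3
      have := ((S.mono _).lt_iff_lt (S.subI hv) hwI).1 h3
      exact lt_of_lt_of_le this (min_le_left _ _)
  refine ⟨fun x m => δ (T^[m] x), ⟨?_, ?_⟩, ?_, ?_, ?_⟩
  · intro x z hxz
    by_contra hne
    have hpos : 0 < |(x : ℝ) - z| := abs_pos.2 (sub_ne_zero.2 fun e => hne (Subtype.ext e))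
    obtain ⟨m, hm⟩ := exists_nat_gt (1 / |(x : ℝ) - z| ^ 2)
    rw [div_lt_iff₀ (by positivity)] at hm
    have := hd m x z (fun i _ => congrFun hxz i)
    linarith
  · intro d
    obtain ⟨L, hL1, hL2⟩ := S.exists_limit
    have hY : ∀ d, L d ∈ Y := by
      intro d
      have := S.limit (fun i => L fun j => d (i + j)) d (fun i => hL1 _) (fun i => by
        rw [hL2]
        simp only [add_zero]
        congr 2
        funext j
        congr 1
        omega)
      simpa using this
    refine ⟨⟨L d, hY d⟩, ?_⟩
    have : ∀ m d, δ (T^[m] ⟨L d, hY d⟩) = d m := by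
      intro m
      induction m with
      | zero => intro d; exact (hδ ⟨L d, hY d⟩ ⟨_, hY _⟩ _ (hL2 d).symm).1
      | succ m ih =>
        intro d
        rw [Function.iterate_succ_apply, (hδ ⟨L d, hY d⟩ ⟨_, hY _⟩ _ (hL2 d).symm).2, ih]
    funext m
    exact this m d
  · intro m
    induction m with
    | zero =>
      intro x
      obtain ⟨η, hη, H⟩ := hstep x 1 one_pos
      exact ⟨η, hη, fun z h1 h2 => (H z h1 h2).1⟩
    | succ m ih =>
      intro x
      obtain ⟨ε, hε, H⟩ := ih (T x)
      obtain ⟨η, hη, H'⟩ := hstep x ε hε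
      refine ⟨η, hη, fun z h1 h2 => ?_⟩
      obtain ⟨-, h3, h4⟩ := H' z h1 h2
      simpa only [Function.iterate_succ_apply] using H (T z) h3 h4
  · intro m x z hxz
    have := hd m x z hxz
    linarith [abs_nonneg ((x : ℝ) - z)]
  · intro m
    induction m with
    | zero =>
      intro x z _ hlt
      have := S.order (δ x) (δ z) hlt _ (T x).2 _ (T z).2
      rwa [hT, hT] at this
    | succ m ih =>
      intro x z hxz hlt
      have h1 := ih (T x) (T z) (fun i hi => by
        have := hxz (i + 1) (by omega)
        simpa only [Function.iterate_succ_apply] using this) (by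
        simpa only [Function.iterate_succ_apply] using hlt)
      have h0 : δ x = δ z := hxz 0 (by omega)
      rw [← hT x, ← hT z, ← h0]
      exact (S.mono _).monotoneOn (S.subI (T x).2) (S.subI (T z).2) h1

theorem exists_goodCode {Y : Set ℝ} {h : ℕ × ℕ → ℝ → ℝ} (S : Sys Y h) {X : Type} [TopologicalSpace X] (ι : X → ℝ) (hι : Function.Injective ι)
    (hnhds : ∀ p : X, ∀ U : Set X, U ∈ nhds p ↔
      ∃ ε > 0, ∀ x, ι p ≤ ι x → ι x < ι p + ε → x ∈ U)
    (hrange : ∀ y : ℝ, (∃ x, ι x = y) ↔ Int.fract y ∈ Y) :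
    ∃ φ : X → ℕ → ℕ × ℕ, GoodCode φ := by
  obtain ⟨φ, hb, hc, hd, ho⟩ := S.exists_code
  have e : ℤ ≃ ℕ × ℕ := (Denumerable.eqv ℤ).trans (Denumerable.eqv (ℕ × ℕ)).symm
  let F : X → Y := fun x => ⟨Int.fract (ι x), (hrange _).1 ⟨x, rfl⟩⟩
  have hF : ∀ x, ι x = ⌊ι x⌋ + (F x : ℝ) := fun x => (Int.floor_add_fract _).symm
  let Φ : X → ℕ → ℕ × ℕ := fun x m => Nat.casesOn m (e ⌊ι x⌋) (fun m => φ (F x) m)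
  have hfl : ∀ p : X, ∃ ε > 0, ∀ x, ι p ≤ ι x → ι x < ι p + ε → ⌊ι x⌋ = ⌊ι p⌋ := by
    intro p
    refine ⟨⌊ι p⌋ + 1 - ι p, by linarith [Int.lt_floor_add_one (ι p)], fun x h1 h2 => ?_⟩
    rw [Int.floor_eq_iff]
    constructor <;> linarith [Int.floor_le (ι p)]
  refine ⟨Φ, ⟨?_, ?_⟩, ?_, ?_⟩
  · intro x y hxy
    have h0 : ⌊ι x⌋ = ⌊ι y⌋ := e.injective (congrFun hxy 0)
    have h1 : F x = F y := hb.1 (funext fun m => congrFun hxy (m + 1))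
    apply hι
    rw [hF x, hF y, h0, h1]
  · intro f
    obtain ⟨y, hy⟩ := hb.2 (fun m => f (m + 1))
    have hyI := S.sub y.2
    have hfr : Int.fract (((e.symm (f 0) : ℤ) : ℝ) + y) = y := by
      rw [Int.fract_intCast_add, Int.fract_eq_self.2 hyI]
    have hfo : ⌊((e.symm (f 0) : ℤ) : ℝ) + y⌋ = e.symm (f 0) := by
      rw [Int.floor_intCast_add, Int.floor_eq_zero_iff.2 hyI, add_zero]
    obtain ⟨x, hx⟩ := (hrange (((e.symm (f 0) : ℤ) : ℝ) + y)).2 (by rw [hfr]; exact y.2)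
    refine ⟨x, ?_⟩
    funext m
    cases m with
    | zero =>
      change e ⌊ι x⌋ = f 0
      rw [hx, hfo, Equiv.apply_symm_apply]
    | succ m =>
      change φ (F x) m = f (m + 1)
      have : F x = y := Subtype.ext (by change Int.fract (ι x) = y; rw [hx, hfr])
      rw [this, hy]
  · intro m
    rw [continuous_iff_continuousAt]
    intro p
    apply ContinuousAt.congr (f := fun _ => Φ p m) continuousAt_const
    change {x | Φ p m = Φ x m} ∈ nhds p
    rw [hnhds]
    obtain ⟨ε, hε, H⟩ := hfl p
    cases m with
    | zero =>
      refine ⟨ε, hε, fun x h1 h2 => ?_⟩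
      change e _ = e _
      rw [H x h1 h2]
    | succ m =>
      obtain ⟨η, hη, H'⟩ := hc m (F p)
      refine ⟨min ε η, lt_min hε hη, fun x h1 h2 => ?_⟩
      have h3 := H x h1 (h2.trans_le (by gcongr; exact min_le_left _ _))
      have h4 : ι x < ι p + η := h2.trans_le (by gcongr; exact min_le_right _ _)
      rw [hF x, hF p, h3] at h1 h4
      exact (H' (F x) (by linarith) (by linarith)).symm
  · intro p U hU
    obtain ⟨ε, hε, H⟩ := (hnhds p U).1 hU
    obtain ⟨N, hN⟩ := exists_nat_gt (1 / ε ^ 2)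
    rw [div_lt_iff₀ (by positivity)] at hN
    refine ⟨N + 1, fun m hm => ?_⟩
    obtain ⟨m, rfl⟩ : ∃ k, m = k + 1 := ⟨m - 1, by omega⟩
    refine ⟨(Φ p (m + 1)).1 + 1, fun x hx hK => ?_⟩
    have h0 : ⌊ι x⌋ = ⌊ι p⌋ := e.injective (hx 0 (by omega))
    have hs : ∀ i < m, φ (F x) i = φ (F p) i := fun i hi => hx (i + 1) (by omega)
    have h1 : (F p : ℝ) ≤ F x := ho m (F p) (F x) (fun i hi => (hs i hi).symm)
      (Nat.lt_of_succ_le hK)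
    have h2 := hd m (F x) (F p) hs
    have hNm : (N : ℝ) ≤ m := by exact_mod_cast (by omega : N ≤ m)
    have h3 : |(F x : ℝ) - F p| < ε := by
      by_contra hcon
      push Not at hcon
      have h4 : ε ^ 2 ≤ |(F x : ℝ) - F p| ^ 2 := by gcongr
      have h5 : (N : ℝ) * ε ^ 2 ≤ m * |(F x : ℝ) - F p| ^ 2 := by gcongr
      linarith
    have h4 := (abs_lt.1 h3).2
    apply H x
    · rw [hF x, hF p, h0]; linarith
    · rw [hF x, hF p, h0]; linarith

end Sys

/-- The contraction `x ↦ 1 - 1 / (k + 1 + x)`. -/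
noncomputable def gmap (k : ℕ) (x : ℝ) : ℝ := 1 - 1 / (k + 1 + x)

/-- The map `x ↦ 1 / (r + 2 - x)`. -/
noncomputable def smap (r : ℕ) (x : ℝ) : ℝ := 1 / (r + 2 - x)

lemma gmap_strictMono (k : ℕ) : StrictMonoOn (gmap k) (Icc 0 1) := by
  intro x hx y hy hxy
  have hk : (0 : ℝ) ≤ k := k.cast_nonneg
  have h0 : 0 < (k : ℝ) + 1 + x := by linarith [hx.1]
  have := one_div_lt_one_div_of_lt h0 (by linarith : (k : ℝ) + 1 + x < k + 1 + y)
  unfold gmap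
  linarith

lemma smap_strictMono (r : ℕ) : StrictMonoOn (smap r) (Icc 0 1) := by
  intro x hx y hy hxy
  have hk : (0 : ℝ) ≤ r := r.cast_nonneg
  exact one_div_lt_one_div_of_lt (by linarith [hy.2]) (by linarith)

lemma gmap_mem (k : ℕ) {x : ℝ} (hx : x ∈ Icc (0 : ℝ) 1) : gmap k x ∈ Ico (0 : ℝ) 1 := by
  have hk : (0 : ℝ) ≤ k := k.cast_nonneg
  have h0 : 0 < (k : ℝ) + 1 + x := by linarith [hx.1]
  unfold gmap
  have h1 : 1 / ((k : ℝ) + 1 + x) ≤ 1 := by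
    rw [div_le_one h0]; linarith [hx.1]
  have h2 : 0 < 1 / ((k : ℝ) + 1 + x) := by positivity
  constructor <;> linarith

lemma gmap_pos (k : ℕ) {x : ℝ} (hx : 0 < x) : 0 < gmap k x := by
  have hk : (0 : ℝ) ≤ k := k.cast_nonneg
  have h0 : 0 < (k : ℝ) + 1 + x := by linarith
  unfold gmap
  have h1 : 1 / ((k : ℝ) + 1 + x) < 1 := by
    rw [div_lt_one h0]; linarith
  linarith

lemma smap_mem (r : ℕ) {x : ℝ} (hx : x ∈ Icc (0 : ℝ) 1) : smap r x ∈ Ioc (0 : ℝ) 1 := by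
  have hk : (0 : ℝ) ≤ r := r.cast_nonneg
  have h0 : 0 < (r : ℝ) + 2 - x := by linarith [hx.2]
  unfold smap
  refine ⟨by positivity, ?_⟩
  rw [div_le_one h0]; linarith [hx.2]

lemma smap_lt_one (r : ℕ) {x : ℝ} (hx : x < 1) : smap r x < 1 := by
  have hk : (0 : ℝ) ≤ r := r.cast_nonneg
  have h0 : 0 < (r : ℝ) + 2 - x := by linarith
  unfold smap
  rw [div_lt_one h0]; linarith

lemma gmap_expand (k : ℕ) {u v : ℝ} (hu : u ∈ Icc (0 : ℝ) 1) (hv : v ∈ Icc (0 : ℝ) 1) :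
    |gmap k u - gmap k v| + |gmap k u - gmap k v| ^ 2 ≤ |u - v| := by
  wlog huv : v ≤ u generalizing u v
  · have := this hv hu (le_of_not_ge huv)
    rwa [abs_sub_comm u v, abs_sub_comm (gmap k u)]
  have hk : (0 : ℝ) ≤ k := k.cast_nonneg
  have h1 := (gmap_strictMono k).monotoneOn hv hu huv
  rw [abs_of_nonneg (by linarith), abs_of_nonneg (by linarith)]
  have ha : 0 < (k : ℝ) + 1 + u := by linarith [hu.1]
  have hb : 0 < (k : ℝ) + 1 + v := by linarith [hv.1]
  set D := gmap k u - gmap k v with hD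
  have e : D * (((k : ℝ) + 1 + u) * (k + 1 + v)) = u - v := by
    rw [hD]; unfold gmap; field_simp; ring
  have hD0 : 0 ≤ D := by linarith
  have h2 : 1 + u ≤ ((k : ℝ) + 1 + u) * (k + 1 + v) := by nlinarith [hu.1, hv.1, mul_nonneg hk hv.1, mul_nonneg hu.1 hv.1, mul_nonneg hk hu.1, mul_nonneg hk hk]
  have h3 : D ≤ u - v := by nlinarith [hu.1]
  nlinarith [hu.1, hv.1]

lemma gmap_le (k : ℕ) {u v : ℝ} (hu : u ∈ Icc (0 : ℝ) 1) (hv : v ∈ Icc (0 : ℝ) 1) :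
    |gmap k u - gmap k v| ≤ |u - v| := by
  nlinarith [gmap_expand k hu hv, sq_nonneg |gmap k u - gmap k v|]

lemma smap_le (r : ℕ) {u v : ℝ} (hu : u ∈ Icc (0 : ℝ) 1) (hv : v ∈ Icc (0 : ℝ) 1) :
    |smap r u - smap r v| ≤ |u - v| := by
  have hk : (0 : ℝ) ≤ r := r.cast_nonneg
  have ha : 1 ≤ (r : ℝ) + 2 - u := by linarith [hu.2]
  have hb : 1 ≤ (r : ℝ) + 2 - v := by linarith [hv.2]
  have e : u - v = (smap r u - smap r v) * (((r : ℝ) + 2 - u) * (r + 2 - v)) := by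
    have ha' : (r : ℝ) + 2 - u ≠ 0 := by linarith
    have hb' : (r : ℝ) + 2 - v ≠ 0 := by linarith
    unfold smap; field_simp; ring
  have h1 : 1 ≤ ((r : ℝ) + 2 - u) * (r + 2 - v) := by nlinarith
  rw [e, abs_mul, abs_of_nonneg (by linarith : 0 ≤ ((r : ℝ) + 2 - u) * (r + 2 - v))]
  nlinarith [abs_nonneg (smap r u - smap r v)]

lemma gmap_inv (k : ℕ) {x : ℝ} (hx : x < 1) : gmap k (1 / (1 - x) - (k + 1)) = x := by
  have : (1 : ℝ) - x ≠ 0 := by linarith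
  unfold gmap
  rw [add_sub_cancel]
  simp

lemma smap_inv (r : ℕ) (x : ℝ) : smap r (r + 2 - 1 / x) = x := by
  unfold smap
  rw [sub_sub_cancel]
  simp

lemma gmap_onto (k : ℕ) {x : ℝ} (h0 : gmap k 0 ≤ x) (h1 : x < gmap k 1) :
    ∃ v ∈ Ico (0 : ℝ) 1, gmap k v = x := by
  have hk : (0 : ℝ) ≤ k := k.cast_nonneg
  have hx : x < 1 := h1.trans (gmap_mem k (by simp)).2
  refine ⟨1 / (1 - x) - (k + 1), ?_, gmap_inv k hx⟩
  have hx' : 0 < 1 - x := by linarith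
  unfold gmap at h0 h1
  constructor
  · have : (k : ℝ) + 1 ≤ 1 / (1 - x) := by
      rw [le_one_div (by linarith) hx']
      simp only [add_zero] at h0
      linarith
    linarith
  · have : 1 / (1 - x) < (k : ℝ) + 1 + 1 := by
      rw [one_div_lt hx' (by linarith)]
      linarith
    linarith

lemma smap_onto (r : ℕ) {x : ℝ} (h0 : smap r 0 ≤ x) (h1 : x < smap r 1) :
    ∃ v ∈ Ico (0 : ℝ) 1, smap r v = x := by
  have hk : (0 : ℝ) ≤ r := r.cast_nonneg
  have hx : 0 < x := (smap_mem r (by simp)).1.trans_le h0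
  refine ⟨r + 2 - 1 / x, ?_, smap_inv r x⟩
  unfold smap at h0 h1
  constructor
  · have : 1 / x ≤ (r : ℝ) + 2 := by
      rw [one_div_le hx (by linarith)]
      simpa using h0
    linarith
  · have : (r : ℝ) + 2 - 1 < 1 / x := by
      rw [lt_one_div (by linarith) hx]
      exact h1
    linarith

lemma gmap_cover {x : ℝ} (hx : x ∈ Ico (0 : ℝ) 1) : ∃ k, ∃ v ∈ Ico (0 : ℝ) 1, gmap k v = x := by
  have hx' : 0 < 1 - x := by linarith [hx.2]
  have h1 : 1 ≤ 1 / (1 - x) := by rw [le_div_iff₀ hx']; linarith [hx.1]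
  have h2 : 1 ≤ ⌊1 / (1 - x)⌋₊ := Nat.one_le_floor_iff _ |>.2 h1
  obtain ⟨k, hk⟩ : ∃ k, ⌊1 / (1 - x)⌋₊ = k + 1 := ⟨_, (Nat.sub_add_cancel h2).symm⟩
  refine ⟨k, _, ?_, gmap_inv k hx.2⟩
  have h3 := Nat.floor_le (by linarith : 0 ≤ 1 / (1 - x))
  have h4 := Nat.lt_floor_add_one (1 / (1 - x))
  rw [hk] at h3 h4
  push_cast at h3 h4
  constructor <;> linarith

lemma smap_cover {x : ℝ} (hx : x ∈ Ioo (0 : ℝ) 1) : ∃ r, ∃ v ∈ Icc (0 : ℝ) 1, smap r v = x := by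
  have h1 : 1 ≤ 1 / x := by rw [le_div_iff₀ hx.1]; linarith [hx.2]
  have h2 : 1 ≤ ⌊1 / x⌋₊ := Nat.one_le_floor_iff _ |>.2 h1
  obtain ⟨k, hk⟩ : ∃ k, ⌊1 / x⌋₊ = k + 1 := ⟨_, (Nat.sub_add_cancel h2).symm⟩
  refine ⟨k, _, ?_, smap_inv k x⟩
  have h3 := Nat.floor_le (by linarith : 0 ≤ 1 / x)
  have h4 := Nat.lt_floor_add_one (1 / x)
  rw [hk] at h3 h4
  push_cast at h3 h4
  constructor <;> linarith

lemma nat_eq_of_close {a b : ℕ} {u v : ℝ} (hu : u ∈ Ico (0 : ℝ) 1) (hv : v ∈ Ico (0 : ℝ) 1)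
    (h : (a : ℝ) - b = u - v) : a = b := by
  have h1 : (a : ℝ) < b + 1 := by linarith [hu.2, hv.1]
  have h2 : (b : ℝ) < a + 1 := by linarith [hu.1, hv.2]
  have h1 : a < b + 1 := by exact_mod_cast h1
  have h2 : b < a + 1 := by exact_mod_cast h2
  omega

lemma gmap_uniq {k l : ℕ} {u v : ℝ} (hu : u ∈ Ico (0 : ℝ) 1) (hv : v ∈ Ico (0 : ℝ) 1)
    (h : gmap k u = gmap l v) : k = l ∧ u = v := by
  have h' : (k : ℝ) + 1 + u = l + 1 + v := by
    unfold gmap at h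
    have : 1 / ((k : ℝ) + 1 + u) = 1 / (l + 1 + v) := by linarith
    simpa using this
  have e : k = l := nat_eq_of_close hv hu (by linarith)
  subst e
  exact ⟨rfl, by linarith⟩

lemma smap_uniq {k l : ℕ} {u v : ℝ} (hu : u ∈ Ico (0 : ℝ) 1) (hv : v ∈ Ico (0 : ℝ) 1)
    (h : smap k u = smap l v) : k = l ∧ u = v := by
  have h' : (k : ℝ) + 2 - u = l + 2 - v := by
    unfold smap at h
    simpa using h
  have e : k = l := nat_eq_of_close hu hv (by linarith)
  subst e
  exact ⟨rfl, by linarith⟩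

lemma gmap_order {k l : ℕ} (hkl : k < l) {u v : ℝ} (hu : u ∈ Icc (0 : ℝ) 1)
    (hv : v ∈ Icc (0 : ℝ) 1) : gmap k u ≤ gmap l v := by
  have hk : (0 : ℝ) ≤ k := k.cast_nonneg
  have h : (k : ℝ) + 1 ≤ l := by exact_mod_cast hkl
  unfold gmap
  have := one_div_le_one_div_of_le (by linarith [hu.1] : 0 < (k : ℝ) + 1 + u)
    (by linarith [hu.2, hv.1] : (k : ℝ) + 1 + u ≤ l + 1 + v)
  linarith

lemma Ico_sub_Icc' {x : ℝ} (h : x ∈ Ico (0 : ℝ) 1) : x ∈ Icc (0 : ℝ) 1 := ⟨h.1, h.2.le⟩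

theorem sys_real : Sys (Ico 0 1) (fun d u => gmap d.1 (gmap d.2 u)) where
  sub := subset_rfl
  maps := fun d u hu => Ico_sub_Icc' (gmap_mem _ (Ico_sub_Icc' (gmap_mem _ hu)))
  mono := fun d u hu v hv huv => gmap_strictMono _ (Ico_sub_Icc' (gmap_mem _ hu))
    (Ico_sub_Icc' (gmap_mem _ hv)) (gmap_strictMono _ hu hv huv)
  expand := fun d u hu v hv => (gmap_expand _ (Ico_sub_Icc' (gmap_mem _ hu))
    (Ico_sub_Icc' (gmap_mem _ hv))).trans (gmap_le _ hu hv)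
  cover := by
    intro x hx
    obtain ⟨k, w, hw, rfl⟩ := gmap_cover hx
    obtain ⟨r, v, hv, rfl⟩ := gmap_cover hw
    exact ⟨(k, r), v, hv, rfl⟩
  onto := by
    rintro ⟨k, r⟩ x hx h0 h1
    dsimp only at h0 h1 ⊢
    have hm := (gmap_strictMono k)
    have m0 := gmap_mem r (x := 0) (by simp)
    have m1 := gmap_mem r (x := 1) (by simp)
    obtain ⟨w, hw, rfl⟩ := gmap_onto k
      ((hm.monotoneOn (by simp) (Ico_sub_Icc' m0) m0.1).trans h0)
      (h1.trans_le (hm.monotoneOn (Ico_sub_Icc' m1) (by simp) m1.2.le))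
    obtain ⟨v, hv, rfl⟩ := gmap_onto r
      ((hm.le_iff_le (Ico_sub_Icc' m0) (Ico_sub_Icc' hw)).1 h0)
      ((hm.lt_iff_lt (Ico_sub_Icc' hw) (Ico_sub_Icc' m1)).1 h1)
    exact ⟨v, hv, rfl⟩
  uniq := by
    rintro ⟨k, r⟩ ⟨k', r'⟩ u hu v hv h
    obtain ⟨e1, e2⟩ := gmap_uniq (gmap_mem _ (Ico_sub_Icc' hu)) (gmap_mem _ (Ico_sub_Icc' hv)) h
    obtain ⟨e3, -⟩ := gmap_uniq hu hv e2
    exact Prod.ext e1 e3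
  order := fun d d' h u hu v hv => gmap_order h (Ico_sub_Icc' (gmap_mem _ (Ico_sub_Icc' hu)))
    (Ico_sub_Icc' (gmap_mem _ (Ico_sub_Icc' hv)))
  limit := by
    intro x d hx h
    rw [h 0]
    exact gmap_mem _ (Ico_sub_Icc' (gmap_mem _ (hx _)))

lemma Ioc_sub_Icc' {x : ℝ} (h : x ∈ Ioc (0 : ℝ) 1) : x ∈ Icc (0 : ℝ) 1 := ⟨h.1.le, h.2⟩

lemma irr_of_gs {k r : ℕ} {u : ℝ} (h : Irrational (gmap k (smap r u))) : Irrational u := by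
  rintro ⟨q, rfl⟩
  apply h
  refine ⟨1 - 1 / (k + 1 + 1 / (r + 2 - q)), ?_⟩
  unfold gmap smap
  push_cast
  rfl

lemma descent (N : ℕ) : ∀ (x : ℕ → ℝ) (d : ℕ → ℕ × ℕ), (∀ i, x i ∈ Icc (0 : ℝ) 1) →
    (∀ i, x i = gmap (d i).1 (smap (d i).2 (x (i + 1)))) →
    ∀ p q : ℤ, 0 < q → q ≤ N → x 0 * q = p → False := by
  induction N with
  | zero => intro x d _ _ p q h1 h2; simp at h2; omega
  | succ N ih =>
    intro x d hx hrec p q hq hqN hpq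
    set k := (d 0).1
    set r := (d 0).2
    set w := smap r (x 1) with hw
    have hwI : w ∈ Ioc (0 : ℝ) 1 := smap_mem r (hx 1)
    have h0 : x 0 = gmap k w := hrec 0
    have hk : (0 : ℝ) ≤ k := k.cast_nonneg
    have hr : (0 : ℝ) ≤ r := r.cast_nonneg
    have hqR : (0 : ℝ) < q := by exact_mod_cast hq
    have hpos : 0 < x 0 := by rw [h0]; exact gmap_pos k hwI.1
    have hd : (k : ℝ) + 1 + w ≠ 0 := by linarith [hwI.1]
    have e1 : (1 - x 0) * (k + 1 + w) = 1 := by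
      rw [h0]; unfold gmap; field_simp; ring
    have hp : (0 : ℝ) < p := by rw [← hpq]; positivity
    have hbpos : (0 : ℝ) < q - p := by
      have : x 0 < 1 := by rw [h0]; exact (gmap_mem k (Ioc_sub_Icc' hwI)).2
      nlinarith
    have e2 : ((q : ℝ) - p) * (k + 1 + w) = q := by
      rw [← hpq]; linear_combination (q : ℝ) * e1
    have e3 : w * ((q : ℝ) - p) = q - (k + 1) * (q - p) := by linear_combination e2
    have hapos : 0 < w * ((q : ℝ) - p) := mul_pos hwI.1 hbpos
    have hale : w * ((q : ℝ) - p) < q := by nlinarith [hwI.2]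
    have e4 : w * (r + 2 - x 1) = 1 := by
      have : (r : ℝ) + 2 - x 1 ≠ 0 := by linarith [(hx 1).2]
      rw [hw]; unfold smap; field_simp
    refine ih (fun i => x (i + 1)) (fun i => d (i + 1)) (fun i => hx _) (fun i => hrec _)
      ((r + 2) * (q - (k + 1) * (q - p)) - (q - p)) (q - (k + 1) * (q - p)) ?_ ?_ ?_
    · rw [e3] at hapos
      exact_mod_cast hapos
    · rw [e3] at hale
      have : q - (k + 1) * (q - p) < q := by exact_mod_cast hale
      push_cast at hqN
      linarith
    · push_cast
      rw [← e3]
      linear_combination (-(q : ℝ) + p) * e4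

theorem sys_irr : Sys {x | x ∈ Ioo (0 : ℝ) 1 ∧ Irrational x}
    (fun d u => gmap d.1 (smap d.2 u)) where
  sub := fun x hx => ⟨hx.1.1.le, hx.1.2⟩
  maps := fun d u hu => Ico_sub_Icc' (gmap_mem _ (Ioc_sub_Icc' (smap_mem _ hu)))
  mono := fun d u hu v hv huv => gmap_strictMono _ (Ioc_sub_Icc' (smap_mem _ hu))
    (Ioc_sub_Icc' (smap_mem _ hv)) (smap_strictMono _ hu hv huv)
  expand := fun d u hu v hv => (gmap_expand _ (Ioc_sub_Icc' (smap_mem _ hu))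
    (Ioc_sub_Icc' (smap_mem _ hv))).trans (smap_le _ hu hv)
  cover := by
    rintro x ⟨hx, hxi⟩
    obtain ⟨k, w, hw, rfl⟩ := gmap_cover ⟨hx.1.le, hx.2⟩
    have hw0 : w ≠ 0 := by
      rintro rfl
      apply hxi
      refine ⟨1 - 1 / (k + 1), ?_⟩
      unfold gmap
      push_cast
      simp
    obtain ⟨r, v, hv, rfl⟩ := smap_cover ⟨lt_of_le_of_ne hw.1 hw0.symm, hw.2⟩
    have hvi := irr_of_gs hxi
    refine ⟨(k, r), v, ⟨⟨lt_of_le_of_ne hv.1 ?_, lt_of_le_of_ne hv.2 ?_⟩, hvi⟩, rfl⟩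
    · exact fun e => hvi.ne_zero e.symm
    · exact hvi.ne_one
  onto := by
    rintro ⟨k, r⟩ x ⟨hx, hxi⟩ h0 h1
    dsimp only at h0 h1 ⊢
    have hm := (gmap_strictMono k)
    have m0 := smap_mem r (x := 0) (by simp)
    have m1 := smap_mem r (x := 1) (by simp)
    obtain ⟨w, hw, rfl⟩ := gmap_onto k
      ((hm.monotoneOn (by simp) (Ioc_sub_Icc' m0) m0.1.le).trans h0)
      (h1.trans_le (hm.monotoneOn (Ioc_sub_Icc' m1) (by simp) m1.2))
    obtain ⟨v, hv, rfl⟩ := smap_onto r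
      ((hm.le_iff_le (Ioc_sub_Icc' m0) (Ico_sub_Icc' hw)).1 h0)
      ((hm.lt_iff_lt (Ico_sub_Icc' hw) (Ioc_sub_Icc' m1)).1 h1)
    have hvi := irr_of_gs hxi
    exact ⟨v, ⟨⟨lt_of_le_of_ne hv.1 fun e => hvi.ne_zero e.symm, hv.2⟩, hvi⟩, rfl⟩
  uniq := by
    rintro ⟨k, r⟩ ⟨k', r'⟩ u ⟨hu, -⟩ v ⟨hv, -⟩ h
    have hu' : u ∈ Ico (0 : ℝ) 1 := ⟨hu.1.le, hu.2⟩
    have hv' : v ∈ Ico (0 : ℝ) 1 := ⟨hv.1.le, hv.2⟩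
    obtain ⟨e1, e2⟩ := gmap_uniq ⟨(smap_mem r (Ico_sub_Icc' hu')).1.le, smap_lt_one r hu.2⟩
      ⟨(smap_mem r' (Ico_sub_Icc' hv')).1.le, smap_lt_one r' hv.2⟩ h
    obtain ⟨e3, -⟩ := smap_uniq hu' hv' e2
    exact Prod.ext e1 e3
  order := fun d d' h u hu v hv => gmap_order h
    (Ioc_sub_Icc' (smap_mem _ ⟨hu.1.1.le, hu.1.2.le⟩))
    (Ioc_sub_Icc' (smap_mem _ ⟨hv.1.1.le, hv.1.2.le⟩))
  limit := by
    intro x d hx h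
    refine ⟨⟨?_, ?_⟩, ?_⟩
    · rw [h 0]
      exact gmap_pos _ (smap_mem _ (hx _)).1
    · rw [h 0]
      exact (gmap_mem _ (Ioc_sub_Icc' (smap_mem _ (hx _)))).2
    · rintro ⟨a, ha⟩
      refine descent a.den x d hx h a.num a.den (by exact_mod_cast a.den_pos) le_rfl ?_
      rw [← ha]
      exact_mod_cast Rat.mul_den_eq_num a

/-- The underlying real number of a point of the Sorgenfrey line. -/
def toR (x : SorgLine) : ℝ := x

lemma sorg_nhds (p : SorgLine) (U : Set SorgLine) : U ∈ nhds p ↔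
    ∃ ε > 0, ∀ x, toR p ≤ toR x → toR x < toR p + ε → x ∈ U := by
  constructor
  · intro hU
    obtain ⟨V, hVU, hV, hp⟩ := mem_nhds_iff.1 hU
    have key : ∀ V : Set SorgLine,
        TopologicalSpace.GenerateOpen {s : Set ℝ | ∃ a b : ℝ, s = Set.Ico a b} V →
        ∀ p ∈ V, ∃ ε > 0, ∀ x, toR p ≤ toR x → toR x < toR p + ε → x ∈ V := by
      intro V hV
      induction hV with
      | basic s hs =>
        obtain ⟨a, b, rfl⟩ := hs
        intro p hp
        refine ⟨b - toR p, sub_pos.2 hp.2, fun x h1 h2 => ⟨?_, ?_⟩⟩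
        · exact le_trans hp.1 h1
        · exact lt_of_lt_of_eq h2 (by ring)
      | univ => intro p _; exact ⟨1, one_pos, fun x _ _ => mem_univ _⟩
      | inter s t _ _ ihs iht =>
        rintro p ⟨h1, h2⟩
        obtain ⟨a, ha, Ha⟩ := ihs p h1
        obtain ⟨b, hb, Hb⟩ := iht p h2
        refine ⟨min a b, lt_min ha hb, fun x h1 h2 => ⟨Ha x h1 ?_, Hb x h1 ?_⟩⟩
        · linarith [min_le_left a b]
        · linarith [min_le_right a b]
      | sUnion S _ ih =>
        rintro p ⟨s, hs, hp⟩
        obtain ⟨a, ha, Ha⟩ := ih s hs p hp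
        exact ⟨a, ha, fun x h1 h2 => ⟨s, hs, Ha x h1 h2⟩⟩
    obtain ⟨ε, hε, H⟩ := key V hV p hp
    exact ⟨ε, hε, fun x h1 h2 => hVU (H x h1 h2)⟩
  · rintro ⟨ε, hε, H⟩
    refine mem_nhds_iff.2 ⟨(Set.Ico (toR p) (toR p + ε) : Set ℝ), fun x hx => H x hx.1 hx.2, ?_, ?_⟩
    · exact TopologicalSpace.GenerateOpen.basic _ ⟨_, _, rfl⟩
    · exact ⟨le_rfl, lt_add_of_pos_right _ hε⟩

theorem real_goodCode : ∃ φ : SorgLine → ℕ → ℕ × ℕ, GoodCode φ :=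
  sys_real.exists_goodCode toR (fun _ _ h => h) sorg_nhds
    (fun y => ⟨fun _ => ⟨Int.fract_nonneg y, Int.fract_lt_one y⟩, fun _ => ⟨y, rfl⟩⟩)

lemma irr_fract (y : ℝ) : Irrational (Int.fract y) ↔ Irrational y := by
  unfold Int.fract
  exact irrational_sub_intCast_iff

theorem irr_goodCode : ∃ φ : ↥IrrSorg → ℕ → ℕ × ℕ, GoodCode φ := by
  refine sys_irr.exists_goodCode (fun x => toR x.1) (fun _ _ h => Subtype.ext h) ?_ ?_
  · intro p U
    rw [mem_nhds_subtype]
    constructor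
    · rintro ⟨V, hV, hVU⟩
      obtain ⟨ε, hε, H⟩ := (sorg_nhds _ _).1 hV
      exact ⟨ε, hε, fun x h1 h2 => hVU (H x.1 h1 h2)⟩
    · rintro ⟨ε, hε, H⟩
      refine ⟨{x | toR p.1 ≤ toR x ∧ toR x < toR p.1 + ε}, (sorg_nhds _ _).2
        ⟨ε, hε, fun x h1 h2 => ⟨h1, h2⟩⟩, fun x hx => H x hx.1 hx.2⟩
  · intro y
    constructor
    · rintro ⟨x, rfl⟩
      have hi : Irrational (Int.fract (toR x.1)) := (irr_fract _).2 x.2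
      exact ⟨⟨lt_of_le_of_ne (Int.fract_nonneg _) fun e => hi.ne_zero e.symm,
        Int.fract_lt_one _⟩, hi⟩
    · rintro ⟨-, hi⟩
      exact ⟨⟨y, (irr_fract y).1 hi⟩, rfl⟩

end PiTreeProof

/-- Finite powers of the Sorgenfrey line and of the irrational Sorgenfrey
line have π-trees. -/
theorem finite_powers_of_sorgenfrey_have_piTree (n : ℕ) (hn : 1 ≤ n) :
    (∃ F : FoliageTree (Fin n → SorgLine), F.IsPiTree) ∧
      ∃ F : FoliageTree (Fin n → ↥IrrSorg), F.IsPiTree := by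
  obtain ⟨φ, hφ⟩ := PiTreeProof.real_goodCode
  obtain ⟨χ, hχ⟩ := PiTreeProof.irr_goodCode
  obtain ⟨Φ, hΦ⟩ := hφ.pi n hn
  obtain ⟨Χ, hΧ⟩ := hχ.pi n hn
  exact ⟨hΦ.exists_piTree, hΧ.exists_piTree⟩
end
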